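/- Let u : ℝⁿ → ℝ be continuous on the closed half-space {x ∈ ℝⁿ : xₙ ≥ 0} and twice continuously differentiable on the open half-space ℝⁿ₊, satisfying −Δu(x) = |∇u(x)|^p for every x ∈ ℝⁿ₊ and u(x̃, 0) = 0 for every x̃ ∈ ℝ^{n−1}. Then either u ≡ 0 on the closed half-space, or there exists α ≥ 0 such that u(x) = c_p ((α + xₙ)^{1−β} − α^{1−β}) for all x with xₙ ≥ 0. -/

import Mathlib

open Set Metric Filter RealInnerProductSpace

noncomputable section

/-- The Laplacian of `u : ℝⁿ → ℝ`, as the sum of the second derivatives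
`∂²u/∂xᵢ²` (computed via iterated Fréchet derivatives). -/
def lap {n : ℕ} (u : EuclideanSpace ℝ (Fin n) → ℝ) (x : EuclideanSpace ℝ (Fin n)) : ℝ :=
  ∑ i : Fin n, fderiv ℝ (fun y => fderiv ℝ u y (EuclideanSpace.single i (1 : ℝ))) x
    (EuclideanSpace.single i (1 : ℝ))

/-
For a supersolution, a radial barrier whose slope is infinite at the centre and at the boundary
sphere of a ball gives a one-sided Hölder bound of exponent `1 - β`, with a constant that depends
neither on the solution nor on the radius. In the half-space it yields `|u| ≤ C xₙ ^ (1 - β)`.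

At large height, `u` is then compared with itself by doubling the variables. Reflecting the
directions of differentiation at one of the two points makes the concave modulus
`K |x - y| ^ (1 - β / 2)` strict, for every `K > 0` once the ball is large. Hence the increments
`u (x + h) - u x` tend to `0` as `xₙ → ∞`.

If `h` is tangential, these increments vanish on the boundary too. The maximum principle in a wide
slab, where the convexity of `t ↦ t ^ p` absorbs the gradient of the penalization, then gives
`u (x + h) ≤ u x`. So `u` depends only on `xₙ`, and its derivative `z` solves `z' = -|z| ^ p` on
`(0, ∞)`: either `z = 0`, or `z = d_p (α + t) ^ (-β)` with `α ≥ 0`.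
-/

open Topology Laplacian

section LineJet

variable {F G : Type*} [NormedAddCommGroup F] [NormedSpace ℝ F]
  [NormedAddCommGroup G] [NormedSpace ℝ G]

/-- `φ` is twice differentiable at `x` along every line through `x`, with first derivative `l a` and
second derivative `q a` in the direction `a`. The maximum principle only needs this much regularity
of the test functions, and it is preserved by the chain rule without any Fréchet calculus. -/
def HasLineJetAt (φ : F → ℝ) (l q : F → ℝ) (x : F) : Prop :=
  ∀ a, ∃ d : ℝ → ℝ, (∀ᶠ t in 𝓝 (0 : ℝ), HasDerivAt (fun s : ℝ => φ (x + s • a)) (d t) t) ∧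
    d 0 = l a ∧ HasDerivAt d (q a) 0

lemma tendsto_add_smul_zero (x a : F) : Tendsto (fun t : ℝ => x + t • a) (𝓝 0) (𝓝 x) := by
  have : Continuous fun t : ℝ => x + t • a := by fun_prop
  simpa using this.tendsto 0

lemma isLocalMin_line {φ : F → ℝ} {x : F} (hmin : IsLocalMin φ x) (a : F) :
    IsLocalMin (fun t : ℝ => φ (x + t • a)) 0 := by
  simpa [IsLocalMin, IsMinFilter] using (tendsto_add_smul_zero x a).eventually hmin

lemma deriv_deriv_nonneg_of_isLocalMin {g : ℝ → ℝ} {t : ℝ} (hmin : IsLocalMin g t)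
    (hg : ContinuousAt g t) : 0 ≤ deriv (deriv g) t := by
  by_contra! hneg
  have hmax := isLocalMax_of_deriv_deriv_neg hneg hmin.deriv_eq_zero hg
  have hconst : g =ᶠ[𝓝 t] fun _ => g t := by
    filter_upwards [hmin, hmax] with s h₁ h₂ using le_antisymm h₂ h₁
  have hzero : deriv (deriv g) t = 0 := by
    rw [hconst.deriv.deriv_eq]
    simp
  exact hneg.ne hzero

namespace HasLineJetAt

variable {φ ψ : F → ℝ} {l l' q q' : F → ℝ} {x : F}

lemma congr_jet (h : HasLineJetAt φ l q x) (hl : ∀ a, l a = l' a) (hq : ∀ a, q a = q' a) :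
    HasLineJetAt φ l' q' x := by
  rwa [← funext hl, ← funext hq]

lemma add (hφ : HasLineJetAt φ l q x) (hψ : HasLineJetAt ψ l' q' x) :
    HasLineJetAt (fun z => φ z + ψ z) (fun a => l a + l' a) (fun a => q a + q' a) x := by
  intro a
  obtain ⟨d, hd, hl, hq⟩ := hφ a
  obtain ⟨d', hd', hl', hq'⟩ := hψ a
  refine ⟨fun t => d t + d' t, ?_, congrArg₂ (· + ·) hl hl', hq.add hq'⟩
  filter_upwards [hd, hd'] with t h h' using h.add h'

lemma const_mul (c : ℝ) (hφ : HasLineJetAt φ l q x) :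
    HasLineJetAt (fun z => c * φ z) (fun a => c * l a) (fun a => c * q a) x := by
  intro a
  obtain ⟨d, hd, hl, hq⟩ := hφ a
  refine ⟨fun t => c * d t, ?_, congrArg (c * ·) hl, hq.const_mul c⟩
  filter_upwards [hd] with t h using h.const_mul c

lemma sub (hφ : HasLineJetAt φ l q x) (hψ : HasLineJetAt ψ l' q' x) :
    HasLineJetAt (fun z => φ z - ψ z) (fun a => l a - l' a) (fun a => q a - q' a) x := by
  simpa [sub_eq_add_neg] using hφ.add (hψ.const_mul (-1))

lemma continuousAt_line (hφ : HasLineJetAt φ l q x) (a : F) :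
    ContinuousAt (fun t : ℝ => φ (x + t • a)) 0 := by
  obtain ⟨d, hd, -⟩ := hφ a
  exact hd.self_of_nhds.continuousAt

lemma comp {f f' : ℝ → ℝ} {f'' : ℝ} (hφ : HasLineJetAt φ l q x)
    (hf : ∀ᶠ s in 𝓝 (φ x), HasDerivAt f (f' s) s) (hf' : HasDerivAt f' f'' (φ x)) :
    HasLineJetAt (fun z => f (φ z)) (fun a => f' (φ x) * l a)
      (fun a => f'' * l a ^ 2 + f' (φ x) * q a) x := by
  intro a
  have hcont : Tendsto (fun t : ℝ => φ (x + t • a)) (𝓝 0) (𝓝 (φ x)) := by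
    simpa using (hφ.continuousAt_line a).tendsto
  obtain ⟨d, hd, hl, hq⟩ := hφ a
  refine ⟨fun t => f' (φ (x + t • a)) * d t, ?_, by simp [hl], ?_⟩
  · filter_upwards [hd, hcont.eventually hf] with t ht hft using hft.comp t ht
  · have hf0 : HasDerivAt f' f'' (φ (x + (0 : ℝ) • a)) := by simpa using hf'
    refine ((hf0.comp (0 : ℝ) hd.self_of_nhds).mul hq).congr_deriv ?_
    simp only [Function.comp_apply, zero_smul, add_zero, hl]
    ring

lemma comp_affine {φ : G → ℝ} {l q : G → ℝ} {A B : F → G} (hφ : HasLineJetAt φ l q (A x))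
    (hA : ∀ a (t : ℝ), A (x + t • a) = A x + t • B a) :
    HasLineJetAt (fun z => φ (A z)) (fun a => l (B a)) (fun a => q (B a)) x := by
  intro a
  simpa only [hA] using hφ (B a)

lemma of_contDiffAt (hφ : ContDiffAt ℝ 2 φ x) :
    HasLineJetAt φ (fun a => fderiv ℝ φ x a) (fun a => iteratedFDeriv ℝ 2 φ x ![a, a]) x := by
  intro a
  have hline : ∀ t : ℝ, HasDerivAt (fun s : ℝ => x + s • a) a t := fun t => by
    simpa using ((hasDerivAt_id t).smul_const a).const_add x
  refine ⟨fun t => fderiv ℝ φ (x + t • a) a, ?_, by simp, ?_⟩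
  · filter_upwards [(tendsto_add_smul_zero x a).eventually (hφ.eventually (by simp))] with t ht
    exact (ht.differentiableAt (by norm_num)).hasFDerivAt.comp_hasDerivAt t (hline t)
  · have hφ' : HasFDerivAt (fderiv ℝ φ) (fderiv ℝ (fderiv ℝ φ) x) (x + (0 : ℝ) • a) := by
      simpa using ((hφ.fderiv_right (m := 1) (by norm_num)).differentiableAt
        (by norm_num)).hasFDerivAt
    have hline' := hφ'.comp_hasDerivAt (0 : ℝ) (hline 0)
    refine (hline'.clm_apply (hasDerivAt_const (0 : ℝ) a)).congr_deriv ?_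
    simp [iteratedFDeriv_two_apply]

lemma fst_eq_zero_of_isLocalMin (hφ : HasLineJetAt φ l q x) (hmin : IsLocalMin φ x) (a : F) :
    l a = 0 := by
  obtain ⟨d, hd, hl, -⟩ := hφ a
  rw [← hl]
  exact (isLocalMin_line hmin a).hasDerivAt_eq_zero hd.self_of_nhds

lemma snd_nonneg_of_isLocalMin (hφ : HasLineJetAt φ l q x) (hmin : IsLocalMin φ x) (a : F) :
    0 ≤ q a := by
  obtain ⟨d, hd, -, hq⟩ := hφ a
  have hderiv : deriv (fun t : ℝ => φ (x + t • a)) =ᶠ[𝓝 0] d := hd.mono fun t ht => ht.deriv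
  have := deriv_deriv_nonneg_of_isLocalMin (isLocalMin_line hmin a) (hφ.continuousAt_line a)
  rwa [hderiv.deriv_eq, hq.deriv] at this

lemma unique (hφ : HasLineJetAt φ l q x) (hψ : HasLineJetAt ψ l' q' x) (heq : φ =ᶠ[𝓝 x] ψ)
    (a : F) : l a = l' a ∧ q a = q' a := by
  have hmin : ∀ {φ ψ : F → ℝ}, φ =ᶠ[𝓝 x] ψ → IsLocalMin (fun z => φ z - ψ z) x := by
    intro φ ψ h
    filter_upwards [h] with z hz
    rw [hz, h.self_of_nhds, sub_self, sub_self]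
  exact ⟨sub_eq_zero.1 ((hφ.sub hψ).fst_eq_zero_of_isLocalMin (hmin heq) a), le_antisymm
    (sub_nonneg.1 ((hψ.sub hφ).snd_nonneg_of_isLocalMin (hmin heq.symm) a))
    (sub_nonneg.1 ((hφ.sub hψ).snd_nonneg_of_isLocalMin (hmin heq) a))⟩

end HasLineJetAt

end LineJet

section LineJetInner

variable {E : Type*} [NormedAddCommGroup E] [InnerProductSpace ℝ E]

lemma hasLineJetAt_inner (ν x : E) : HasLineJetAt (fun z => ⟪ν, z⟫) (fun a => ⟪ν, a⟫) 0 x := by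
  intro a
  refine ⟨fun _ => ⟪ν, a⟫, Eventually.of_forall fun t => ?_, rfl, hasDerivAt_const _ _⟩
  simpa [inner_add_right, real_inner_smul_right] using
    ((hasDerivAt_id t).mul_const ⟪ν, a⟫).const_add ⟪ν, x⟫

lemma hasLineJetAt_comp_inner {ν x : E} {g g' : ℝ → ℝ} {g'' : ℝ}
    (hg : ∀ᶠ t in 𝓝 ⟪ν, x⟫, HasDerivAt g (g' t) t) (hg' : HasDerivAt g' g'' ⟪ν, x⟫) :
    HasLineJetAt (fun z => g ⟪ν, z⟫) (fun a => g' ⟪ν, x⟫ * ⟪ν, a⟫) (fun a => g'' * ⟪ν, a⟫ ^ 2)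
      x := by
  simpa using (hasLineJetAt_inner ν x).comp hg hg'

lemma hasLineJetAt_norm_sq (x : E) :
    HasLineJetAt (fun z : E => ‖z‖ ^ 2) (fun a => 2 * ⟪x, a⟫) (fun a => 2 * ‖a‖ ^ 2) x := by
  intro a
  have hexpand : ∀ t : ℝ, ‖x + t • a‖ ^ 2 = ‖x‖ ^ 2 + 2 * ⟪x, a⟫ * t + ‖a‖ ^ 2 * t ^ 2 := by
    intro t
    rw [norm_add_sq_real, real_inner_smul_right, norm_smul, mul_pow, Real.norm_eq_abs, sq_abs]
    ring
  refine ⟨fun t => 2 * ⟪x, a⟫ + 2 * ‖a‖ ^ 2 * t, Eventually.of_forall fun t => ?_, by simp, ?_⟩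
  · simp only [hexpand]
    refine ((((hasDerivAt_id t).const_mul (2 * ⟪x, a⟫)).const_add (‖x‖ ^ 2)).add
      (((hasDerivAt_id t).pow 2).const_mul (‖a‖ ^ 2))).congr_deriv ?_
    simp
    ring
  · simpa using ((hasDerivAt_id (0 : ℝ)).const_mul (2 * ‖a‖ ^ 2)).const_add (2 * ⟪x, a⟫)

lemma hasLineJetAt_norm_sub_sq (y x : E) :
    HasLineJetAt (fun z : E => ‖z - y‖ ^ 2) (fun a => 2 * ⟪x - y, a⟫) (fun a => 2 * ‖a‖ ^ 2) x :=
  (hasLineJetAt_norm_sq (x - y)).comp_affine (A := fun z => z - y) (B := id)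
    fun a t => add_sub_right_comm x (t • a) y

lemma hasLineJetAt_norm {x : E} (hx : x ≠ 0) :
    HasLineJetAt (fun z : E => ‖z‖) (fun a => ⟪x, a⟫ / ‖x‖)
      (fun a => (‖a‖ ^ 2 - (⟪x, a⟫ / ‖x‖) ^ 2) / ‖x‖) x := by
  have hpos : 0 < ‖x‖ := norm_pos_iff.2 hx
  have hsq : ‖x‖ ^ 2 ≠ 0 := by positivity
  have hsqrt : Real.sqrt (‖x‖ ^ 2) = ‖x‖ := Real.sqrt_sq hpos.le
  have hderiv : HasDerivAt (fun s : ℝ => 1 / (2 * √s)) (-1 / (4 * ‖x‖ ^ 3)) (‖x‖ ^ 2) := by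
    have hsqrt' := (Real.hasDerivAt_sqrt hsq).const_mul 2
    refine ((hasDerivAt_const _ (1 : ℝ)).div hsqrt' (by simp [hsqrt, hx])).congr_deriv ?_
    rw [hsqrt]
    field_simp
    norm_num
  have hjet := (hasLineJetAt_norm_sq x).comp (f := Real.sqrt)
    ((eventually_ne_nhds hsq).mono fun s hs => Real.hasDerivAt_sqrt hs) hderiv
  simp only [Real.sqrt_sq (norm_nonneg _)] at hjet
  refine hjet.congr_jet (fun a => ?_) fun a => ?_ <;> field_simp
  ring

/-- The Hessian quadratic form at `w` of a radial function `f ‖·‖`, where `f'` and `f''` are the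
derivatives of `f` at `‖w‖`. -/
def radialHessian (f' f'' : ℝ) (w a : E) : ℝ :=
  f'' * (⟪w, a⟫ / ‖w‖) ^ 2 + f' * ((‖a‖ ^ 2 - (⟪w, a⟫ / ‖w‖) ^ 2) / ‖w‖)

lemma hasLineJetAt_comp_norm {f f' : ℝ → ℝ} {f'' : ℝ} {x : E} (hx : x ≠ 0)
    (hf : ∀ᶠ s in 𝓝 ‖x‖, HasDerivAt f (f' s) s) (hf' : HasDerivAt f' f'' ‖x‖) :
    HasLineJetAt (fun z => f ‖z‖) (fun a => f' ‖x‖ * (⟪x, a⟫ / ‖x‖))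
      (radialHessian (f' ‖x‖) f'' x) x :=
  (hasLineJetAt_norm hx).comp hf hf'

end LineJetInner

section Laplacian

variable {E : Type*} [NormedAddCommGroup E] [InnerProductSpace ℝ E]
  {ι : Type*} [Fintype ι]

lemma sum_norm_sq_orthonormalBasis (b : OrthonormalBasis ι ℝ E) :
    ∑ i, ‖b i‖ ^ 2 = Module.finrank ℝ E := by
  simp [b.orthonormal.1, Module.finrank_eq_card_basis b.toBasis]

lemma sum_inner_div_norm_sq (b : OrthonormalBasis ι ℝ E) {w : E} (hw : w ≠ 0) :
    ∑ i, (⟪w, b i⟫ / ‖w‖) ^ 2 = 1 := by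
  have hw' : ‖w‖ ^ 2 ≠ 0 := by simpa using hw
  simp_rw [div_pow, ← Finset.sum_div, b.sum_sq_inner_left, div_self hw']

lemma sum_radialHessian (b : OrthonormalBasis ι ℝ E) {w : E} (hw : w ≠ 0) (f' f'' : ℝ) :
    ∑ i, radialHessian f' f'' w (b i) = f'' + f' * ((Module.finrank ℝ E - 1) / ‖w‖) := by
  simp only [radialHessian]
  rw [Finset.sum_add_distrib, ← Finset.mul_sum, ← Finset.mul_sum, ← Finset.sum_div,
    Finset.sum_sub_distrib, sum_inner_div_norm_sq b hw, sum_norm_sq_orthonormalBasis, mul_one]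

variable [FiniteDimensional ℝ E]

/-- `u` is `C²` at `x` and `|∇u|ᵖ ≤ -Δu` there. The gradient is replaced by the derivative, which
has the same norm. -/
def IsSupersolutionAt (p : ℝ) (u : E → ℝ) (x : E) : Prop :=
  ContDiffAt ℝ 2 u x ∧ ‖fderiv ℝ u x‖ ^ p ≤ -Δ u x

/-- `u` is `C²` at `x` and `-Δu ≤ |∇u|ᵖ` there. -/
def IsSubsolutionAt (p : ℝ) (u : E → ℝ) (x : E) : Prop :=
  ContDiffAt ℝ 2 u x ∧ -Δ u x ≤ ‖fderiv ℝ u x‖ ^ p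

lemma laplacian_eq_sum_orthonormalBasis (u : E → ℝ) (x : E) (b : OrthonormalBasis ι ℝ E) :
    Δ u x = ∑ i, iteratedFDeriv ℝ 2 u x ![b i, b i] :=
  congrFun (InnerProductSpace.laplacian_eq_iteratedFDeriv_orthonormalBasis u b) x

end Laplacian

section Barrier

variable {β R r t : ℝ}

lemma one_lt_of_mul_sub_one_eq_one {p : ℝ} (hβ : 0 < β) (hβp : β * (p - 1) = 1) : 1 < p :=
  sub_pos.1 (pos_of_mul_pos_right (by rw [hβp]; exact one_pos) hβ.le)

/-- The radial profile of the barrier: up to a factor, its derivative is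
`r ^ (-β) + (R - r) ^ (-β)`, infinite at the centre and at the sphere of radius `R`. -/
def barrier (β R r : ℝ) : ℝ := (r ^ (1 - β) + R ^ (1 - β) - (R - r) ^ (1 - β)) / (1 - β)

lemma hasDerivAt_barrier (hβ : β < 1) (hr : 0 < r) (hrR : r < R) :
    HasDerivAt (barrier β R) (r ^ (-β) + (R - r) ^ (-β)) r := by
  have hinner : HasDerivAt (fun s : ℝ => s ^ (1 - β)) ((1 - β) * r ^ (1 - β - 1)) r :=
    Real.hasDerivAt_rpow_const (Or.inl hr.ne')
  have houter : HasDerivAt (fun s : ℝ => (R - s) ^ (1 - β))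
      (-1 * (1 - β) * (R - r) ^ (1 - β - 1)) r :=
    ((hasDerivAt_id r).const_sub R).rpow_const (Or.inl (sub_pos.2 hrR).ne')
  refine (((hinner.add_const (R ^ (1 - β))).sub houter).div_const (1 - β)).congr_deriv ?_
  have : 1 - β ≠ 0 := (sub_pos.2 hβ).ne'
  rw [show 1 - β - 1 = -β by ring]
  field_simp
  ring

lemma hasDerivAt_deriv_barrier (hr : 0 < r) (hrR : r < R) :
    HasDerivAt (fun s : ℝ => s ^ (-β) + (R - s) ^ (-β))
      (β * ((R - r) ^ (-β - 1) - r ^ (-β - 1))) r := by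
  have hinner : HasDerivAt (fun s : ℝ => s ^ (-β)) (-β * r ^ (-β - 1)) r :=
    Real.hasDerivAt_rpow_const (Or.inl hr.ne')
  have houter : HasDerivAt (fun s : ℝ => (R - s) ^ (-β)) (-1 * -β * (R - r) ^ (-β - 1)) r :=
    ((hasDerivAt_id r).const_sub R).rpow_const (Or.inl (sub_pos.2 hrR).ne')
  exact (hinner.add houter).congr_deriv (by ring)

lemma continuous_barrier (hβ : β < 1) : Continuous (barrier β R) := by
  have hrpow : Continuous fun s : ℝ => s ^ (1 - β) := Real.continuous_rpow_const (sub_pos.2 hβ).le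
  exact ((hrpow.add_const _).sub (hrpow.comp (continuous_const.sub continuous_id))).div_const _

lemma barrier_nonneg (hβ : β < 1) (hr : 0 ≤ r) (hrR : r ≤ R) : 0 ≤ barrier β R r := by
  have hexp : 0 < 1 - β := sub_pos.2 hβ
  have hmono : (R - r) ^ (1 - β) ≤ R ^ (1 - β) :=
    Real.rpow_le_rpow (sub_nonneg.2 hrR) (by linarith) hexp.le
  have hr' : 0 ≤ r ^ (1 - β) := Real.rpow_nonneg hr _
  exact div_nonneg (by linarith) hexp.le

lemma barrier_le (hβ₀ : 0 ≤ β) (hβ : β < 1) (hr : 0 ≤ r) (hrR : r ≤ R) :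
    barrier β R r ≤ 2 / (1 - β) * r ^ (1 - β) := by
  have hexp : 0 < 1 - β := sub_pos.2 hβ
  have hsub := Real.rpow_add_le_add_rpow hr (sub_nonneg.2 hrR) hexp.le (by linarith : 1 - β ≤ 1)
  rw [add_sub_cancel] at hsub
  rw [barrier, div_mul_eq_mul_div]
  gcongr
  linarith

lemma rpow_le_barrier_sub_barrier (hβ : β < 1) (ht : 0 ≤ t) (htR : t ≤ R) :
    t ^ (1 - β) / (1 - β) ≤ barrier β R R - barrier β R (R - t) := by
  have hexp : 0 < 1 - β := sub_pos.2 hβ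
  have hmono : (R - t) ^ (1 - β) ≤ R ^ (1 - β) :=
    Real.rpow_le_rpow (sub_nonneg.2 htR) (by linarith) hexp.le
  rw [barrier, barrier, ← sub_div, sub_self, Real.zero_rpow hexp.ne', sub_sub_cancel]
  gcongr
  linarith

/-- The factor that makes the barrier in dimension `N` a strict supersolution. -/
def barrierCoeff (β N : ℝ) : ℝ := (N + 1) ^ β

lemma barrierCoeff_pos {N : ℝ} (hN : 0 ≤ N) : 0 < barrierCoeff β N := by
  unfold barrierCoeff
  positivity

lemma barrier_strict_supersolution {p N : ℝ} (hβ₀ : 0 < β) (hβ₁ : β < 1) (hβp : β * (p - 1) = 1)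
    (hN : 0 ≤ N) (hr : 0 < r) (hrR : r < R) :
    barrierCoeff β N * (β * ((R - r) ^ (-β - 1) - r ^ (-β - 1)) +
        (r ^ (-β) + (R - r) ^ (-β)) * ((N - 1) / r)) <
      (barrierCoeff β N * (r ^ (-β) + (R - r) ^ (-β))) ^ p := by
  have hD := barrierCoeff_pos (β := β) hN
  have hRr : 0 < R - r := sub_pos.2 hrR
  have hp₁ : 1 < p := one_lt_of_mul_sub_one_eq_one hβ₀ hβp
  set D := barrierCoeff β N with hD_def
  set A := r ^ (-β) with hA_def
  set B := (R - r) ^ (-β) with hB_def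
  have hA : 0 < A := Real.rpow_pos_of_pos hr _
  have hB : 0 < B := Real.rpow_pos_of_pos hRr _
  have hpow : ∀ s : ℝ, 0 < s → s ^ p = s * s ^ (p - 1) := fun s hs => by
    rw [← Real.rpow_one_add' hs.le (by linarith), add_sub_cancel]
  have hD_pow : D ^ (p - 1) = N + 1 := by
    rw [hD_def, barrierCoeff, ← Real.rpow_mul (by positivity), hβp, Real.rpow_one]
  have hA_pow : A ^ (p - 1) = 1 / r := by
    rw [hA_def, ← Real.rpow_mul hr.le, neg_mul, hβp, Real.rpow_neg_one, one_div]
  have hB_pow : (R - r) ^ (-β - 1) = B ^ p := by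
    rw [hB_def, ← Real.rpow_mul hRr.le]
    congr 1
    linarith
  have hr_pow : 0 < r ^ (-β - 1) := Real.rpow_pos_of_pos hr _
  have hsum : 0 < (A + B) ^ p := by positivity
  have hradial : β * (B ^ p - r ^ (-β - 1)) ≤ 1 * (A + B) ^ p := by
    have : B ^ p ≤ (A + B) ^ p := by
      gcongr
      linarith
    nlinarith
  have htangential : (A + B) * ((N - 1) / r) ≤ N * (A + B) ^ p - (A + B) / r := by
    have : 1 / r ≤ (A + B) ^ (p - 1) := by
      rw [← hA_pow]
      gcongr
      linarith
    have := mul_le_mul_of_nonneg_left this (mul_nonneg hN (add_pos hA hB).le)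
    rw [hpow (A + B) (by positivity)]
    calc (A + B) * ((N - 1) / r) = N * (A + B) * (1 / r) - (A + B) / r := by ring
      _ ≤ N * ((A + B) * (A + B) ^ (p - 1)) - (A + B) / r := by linarith
  have hlast : 0 < (A + B) / r := by positivity
  calc D * (β * ((R - r) ^ (-β - 1) - r ^ (-β - 1)) + (A + B) * ((N - 1) / r))
      < D * ((N + 1) * (A + B) ^ p) := by
        rw [hB_pow]
        gcongr
        linarith
    _ = (D * (A + B)) ^ p := by
        rw [Real.mul_rpow hD.le (by positivity), hpow D hD, hD_pow, mul_assoc]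

end Barrier

section BarrierComparison

variable {E : Type*} [NormedAddCommGroup E] [InnerProductSpace ℝ E] {p β R : ℝ} {u : E → ℝ}
  {y z : E}

lemma not_differentiableAt_of_rpow_le {g : ℝ → ℝ} {c γ : ℝ} (hc : 0 < c) (hγ : γ < 1)
    (hg : ∀ᶠ t in 𝓝[>] (0 : ℝ), c * t ^ γ ≤ g t - g 0) : ¬DifferentiableAt ℝ g 0 := by
  intro hdiff
  obtain ⟨M, hM⟩ := hdiff.hasDerivAt.isBigO_sub.bound
  have hle : ∀ᶠ t in 𝓝[>] (0 : ℝ), c ≤ M * t ^ (1 - γ) := by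
    filter_upwards [hg, nhdsWithin_le_nhds hM, self_mem_nhdsWithin] with t hgt hMt (ht : 0 < t)
    have hchain : c * t ^ γ ≤ M * t ^ (1 - γ) * t ^ γ := by
      calc c * t ^ γ ≤ g t - g 0 := hgt
        _ ≤ ‖g t - g 0‖ := Real.le_norm_self _
        _ ≤ M * t := by simpa [abs_of_pos ht] using hMt
        _ = M * t ^ (1 - γ) * t ^ γ := by
            rw [mul_assoc, ← Real.rpow_add ht, sub_add_cancel, Real.rpow_one]
    exact le_of_mul_le_mul_right hchain (Real.rpow_pos_of_pos ht _)
  have hlim : Tendsto (fun t : ℝ => M * t ^ (1 - γ)) (𝓝[>] 0) (𝓝 0) := by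
    have hcont : ContinuousAt (fun t : ℝ => M * t ^ (1 - γ)) 0 :=
      (Real.continuousAt_rpow_const _ _ (Or.inr (sub_pos.2 hγ).le)).const_mul M
    simpa [Real.zero_rpow (sub_pos.2 hγ).ne'] using hcont.tendsto.mono_left nhdsWithin_le_nhds
  exact hc.not_ge (ge_of_tendsto hlim hle)

lemma not_isLocalMinOn_add_barrier_of_norm_eq {D : ℝ} (hD : 0 < D) (hβ₀ : 0 < β) (hβ₁ : β < 1)
    (hR : 0 < R) (hu : DifferentiableAt ℝ u z) (hz : ‖z - y‖ = R) :
    ¬IsLocalMinOn (fun w => u w + D * barrier β R ‖w - y‖) (closedBall y R) z := by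
  intro hmin
  set ray : ℝ → E := fun t => z + t • (y - z) with hray
  have hnorm : ∀ t ∈ Icc (0 : ℝ) 1, ‖ray t - y‖ = R - t * R := fun t ht => by
    rw [show ray t - y = (1 - t) • (z - y) by simp only [hray]; module, norm_smul, hz,
      Real.norm_of_nonneg (sub_nonneg.2 ht.2)]
    ring
  have hmem : ∀ᶠ t in 𝓝[>] (0 : ℝ), t ∈ Icc (0 : ℝ) 1 := Icc_mem_nhdsGT one_pos
  have hlim : Tendsto ray (𝓝[>] 0) (𝓝[closedBall y R] z) := by
    refine tendsto_nhdsWithin_iff.2 ⟨(tendsto_add_smul_zero z _).mono_left nhdsWithin_le_nhds, ?_⟩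
    filter_upwards [hmem] with t ht
    rw [mem_closedBall, dist_eq_norm, hnorm t ht]
    linarith [mul_nonneg ht.1 hR.le]
  have hgrowth : ∀ᶠ t in 𝓝[>] (0 : ℝ),
      D * R ^ (1 - β) / (1 - β) * t ^ (1 - β) ≤ u (ray t) - u (ray 0) := by
    filter_upwards [hlim.eventually hmin, hmem] with t hle ht
    rw [hnorm t ht, hz] at hle
    have hjump := rpow_le_barrier_sub_barrier hβ₁ (mul_nonneg ht.1 hR.le)
      (mul_le_of_le_one_left hR.le ht.2)
    have hscaled := mul_le_mul_of_nonneg_left hjump hD.le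
    have hexpand : D * ((t * R) ^ (1 - β) / (1 - β)) =
        D * R ^ (1 - β) / (1 - β) * t ^ (1 - β) := by
      rw [Real.mul_rpow ht.1 hR.le]
      ring
    have hray0 : ray 0 = z := by simp [hray]
    rw [hray0]
    linarith
  have hcoeff : 0 < D * R ^ (1 - β) / (1 - β) :=
    div_pos (mul_pos hD (Real.rpow_pos_of_pos hR _)) (sub_pos.2 hβ₁)
  refine not_differentiableAt_of_rpow_le hcoeff (by linarith) hgrowth ?_
  have hu' : DifferentiableAt ℝ u (ray 0) := by simpa [hray] using hu
  exact hu'.comp 0 (by fun_prop)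

variable [FiniteDimensional ℝ E]

lemma not_isLocalMin_add_barrier (hβ₀ : 0 < β) (hβ₁ : β < 1) (hβp : β * (p - 1) = 1)
    (hu : IsSupersolutionAt p u z) (hz : z ≠ y) (hzR : ‖z - y‖ < R) :
    ¬IsLocalMin (fun w => u w + barrierCoeff β (Module.finrank ℝ E) * barrier β R ‖w - y‖) z := by
  intro hmin
  have hr : 0 < ‖z - y‖ := norm_pos_iff.2 (sub_ne_zero.2 hz)
  set r := ‖z - y‖ with hr_def
  set D := barrierCoeff β (Module.finrank ℝ E)
  have hD : 0 < D := barrierCoeff_pos (Nat.cast_nonneg _)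
  have hψ := (hasLineJetAt_comp_norm (sub_ne_zero.2 hz) (f := barrier β R)
    (by filter_upwards [Ioo_mem_nhds hr hzR] with s hs using hasDerivAt_barrier hβ₁ hs.1 hs.2)
    (hasDerivAt_deriv_barrier hr hzR)).comp_affine (A := fun w => w - y) (B := id)
    fun a t => add_sub_right_comm z (t • a) y
  have hjet := (HasLineJetAt.of_contDiffAt hu.1).add (hψ.const_mul D)
  simp only [id, ← hr_def] at hjet
  have hgrad : D * (r ^ (-β) + (R - r) ^ (-β)) ≤ ‖fderiv ℝ u z‖ := by
    have hfst := hjet.fst_eq_zero_of_isLocalMin hmin (z - y)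
    rw [real_inner_self_eq_norm_sq, ← hr_def, sq, mul_self_div_self, ← mul_assoc] at hfst
    refine le_of_mul_le_mul_right ?_ hr
    calc _ = -fderiv ℝ u z (z - y) := by linarith
      _ ≤ ‖fderiv ℝ u z (z - y)‖ := neg_le_abs _
      _ ≤ ‖fderiv ℝ u z‖ * r := (fderiv ℝ u z).le_opNorm _
  have htrace : -Δ u z ≤ D * (β * ((R - r) ^ (-β - 1) - r ^ (-β - 1)) +
      (r ^ (-β) + (R - r) ^ (-β)) * ((Module.finrank ℝ E - 1) / r)) := by
    have hsum := Finset.sum_nonneg fun i (_ : i ∈ Finset.univ) =>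
      hjet.snd_nonneg_of_isLocalMin hmin (stdOrthonormalBasis ℝ E i)
    rw [Finset.sum_add_distrib, ← laplacian_eq_sum_orthonormalBasis, ← Finset.mul_sum,
      sum_radialHessian _ (sub_ne_zero.2 hz)] at hsum
    linarith
  have hp : 0 ≤ p := by linarith [one_lt_of_mul_sub_one_eq_one hβ₀ hβp]
  have hpow := Real.rpow_le_rpow (by positivity) hgrad hp
  have hstrict := barrier_strict_supersolution hβ₀ hβ₁ hβp (Nat.cast_nonneg (Module.finrank ℝ E))
    hr hzR
  linarith [hu.2]

end BarrierComparison

section Holder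

variable {E : Type*} [NormedAddCommGroup E] [InnerProductSpace ℝ E] [FiniteDimensional ℝ E]
  {p β R : ℝ} {u : E → ℝ} {x y : E} {K : Set E}

/-- The constant of the one-sided Hölder estimate in dimension `N`, which depends neither on the
supersolution nor on the scale. -/
def holderConst (β N : ℝ) : ℝ := 2 * barrierCoeff β N / (1 - β)

lemma holderConst_pos {N : ℝ} (hβ : β < 1) (hN : 0 ≤ N) : 0 < holderConst β N :=
  div_pos (mul_pos two_pos (barrierCoeff_pos hN)) (sub_pos.2 hβ)

theorem sub_le_holderConst_mul_of_isSupersolutionAt (hβ₀ : 0 < β) (hβ₁ : β < 1)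
    (hβp : β * (p - 1) = 1) (hK : IsClosed K) (huK : ContinuousOn u K)
    (hu : ∀ z ∈ K, ‖z - y‖ ≤ R → u z < u y → K ∈ 𝓝 z ∧ IsSupersolutionAt p u z)
    (hx : x ∈ K) (hxR : ‖x - y‖ ≤ R) :
    u y - u x ≤ holderConst β (Module.finrank ℝ E) * ‖x - y‖ ^ (1 - β) := by
  set D := barrierCoeff β (Module.finrank ℝ E) with hD_def
  have hD : 0 < D := barrierCoeff_pos (Nat.cast_nonneg _)
  set w : E → ℝ := fun z => u z + D * barrier β R ‖z - y‖ with hw_def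
  have hcompact : IsCompact (closedBall y R ∩ K) := (isCompact_closedBall y R).inter_right hK
  have hcont : ContinuousOn w (closedBall y R ∩ K) :=
    (huK.mono inter_subset_right).add
      (((continuous_barrier hβ₁).comp (by fun_prop)).const_mul D).continuousOn
  have hxmem : x ∈ closedBall y R ∩ K := ⟨by rwa [mem_closedBall, dist_eq_norm], hx⟩
  obtain ⟨z, ⟨hzB, hzK⟩, hmin⟩ := hcompact.exists_isMinOn ⟨x, hxmem⟩ hcont
  have hzR : ‖z - y‖ ≤ R := by rwa [mem_closedBall, dist_eq_norm] at hzB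
  have hmin_ge : u y ≤ w z := by
    by_contra! hlt
    have huz : u z < u y := by
      have := mul_nonneg hD.le (barrier_nonneg hβ₁ (norm_nonneg (z - y)) hzR)
      simp only [hw_def] at hlt
      linarith
    have hzy : z ≠ y := fun h => huz.ne (congrArg u h)
    have hr : 0 < ‖z - y‖ := norm_pos_iff.2 (sub_ne_zero.2 hzy)
    obtain ⟨hnhds, hsuper⟩ := hu z hzK hzR huz
    have hlocal : IsLocalMinOn w (closedBall y R) z := by
      filter_upwards [self_mem_nhdsWithin, nhdsWithin_le_nhds hnhds] with a haB haK
      exact hmin ⟨haB, haK⟩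
    rcases hzR.lt_or_eq with hlt | heq
    · refine not_isLocalMin_add_barrier hβ₀ hβ₁ hβp hsuper hzy hlt (hlocal.isLocalMin ?_)
      exact closedBall_mem_nhds_of_mem (by rwa [mem_ball, dist_eq_norm])
    · exact not_isLocalMinOn_add_barrier_of_norm_eq hD hβ₀ hβ₁ (heq ▸ hr)
        (hsuper.1.differentiableAt (by norm_num)) heq hlocal
  have hbarrier := mul_le_mul_of_nonneg_left
    (barrier_le (R := R) hβ₀.le hβ₁ (norm_nonneg (x - y)) hxR) hD.le
  calc u y - u x ≤ w x - u x := sub_le_sub_right (hmin_ge.trans (hmin hxmem)) _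
    _ = D * barrier β R ‖x - y‖ := by simp only [hw_def, add_sub_cancel_left]
    _ ≤ D * (2 / (1 - β) * ‖x - y‖ ^ (1 - β)) := hbarrier
    _ = holderConst β (Module.finrank ℝ E) * ‖x - y‖ ^ (1 - β) := by
        rw [holderConst, ← hD_def]
        ring

end Holder

section HalfSpace

variable {E : Type*} [NormedAddCommGroup E] [InnerProductSpace ℝ E]

lemma isOpen_halfSpace (ν : E) : IsOpen {x : E | 0 < ⟪ν, x⟫} :=
  isOpen_lt continuous_const (by fun_prop)

lemma isClosed_closedHalfSpace (ν : E) : IsClosed {x : E | 0 ≤ ⟪ν, x⟫} :=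
  isClosed_le continuous_const (by fun_prop)

lemma closedHalfSpace_mem_nhds {ν x : E} (hx : 0 < ⟪ν, x⟫) : {z : E | 0 ≤ ⟪ν, z⟫} ∈ 𝓝 x := by
  filter_upwards [(isOpen_halfSpace ν).mem_nhds hx] with z hz
  exact le_of_lt hz

lemma abs_inner_sub_inner_le {ν : E} (hν : ‖ν‖ = 1) (x y : E) : |⟪ν, x⟫ - ⟪ν, y⟫| ≤ ‖x - y‖ := by
  simpa [← inner_sub_right, hν] using abs_real_inner_le_norm ν (x - y)

variable [FiniteDimensional ℝ E]

/-- `u` is a classical solution of `-Δu = |∇u|ᵖ` in the half-space `{x | 0 < ⟪ν, x⟫}`, continuous up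
to the boundary, where it vanishes. The gradient is replaced by the derivative, which has the same
norm. -/
structure IsHalfSpaceSolution (p : ℝ) (ν : E) (u : E → ℝ) : Prop where
  continuousOn : ContinuousOn u {x | 0 ≤ ⟪ν, x⟫}
  contDiffOn : ContDiffOn ℝ 2 u {x | 0 < ⟪ν, x⟫}
  neg_laplacian : ∀ x, 0 < ⟪ν, x⟫ → -Δ u x = ‖fderiv ℝ u x‖ ^ p
  boundary : ∀ x, ⟪ν, x⟫ = 0 → u x = 0

namespace IsHalfSpaceSolution

variable {p β : ℝ} {ν : E} {u : E → ℝ} {x y : E}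

lemma contDiffAt (hu : IsHalfSpaceSolution p ν u) (hx : 0 < ⟪ν, x⟫) : ContDiffAt ℝ 2 u x :=
  hu.contDiffOn.contDiffAt ((isOpen_halfSpace ν).mem_nhds hx)

lemma isSupersolutionAt (hu : IsHalfSpaceSolution p ν u) (hx : 0 < ⟪ν, x⟫) :
    IsSupersolutionAt p u x :=
  ⟨hu.contDiffAt hx, (hu.neg_laplacian x hx).ge⟩

lemma isSubsolutionAt (hu : IsHalfSpaceSolution p ν u) (hx : 0 < ⟪ν, x⟫) :
    IsSubsolutionAt p u x :=
  ⟨hu.contDiffAt hx, (hu.neg_laplacian x hx).le⟩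

lemma sub_le_of_norm_sub_lt (hu : IsHalfSpaceSolution p ν u) (hν : ‖ν‖ = 1) (hβ₀ : 0 < β)
    (hβ₁ : β < 1) (hβp : β * (p - 1) = 1) (hxy : ‖x - y‖ < ⟪ν, y⟫) :
    u y - u x ≤ holderConst β (Module.finrank ℝ E) * ‖x - y‖ ^ (1 - β) := by
  have hball : ∀ z, ‖z - y‖ ≤ ‖x - y‖ → 0 < ⟪ν, z⟫ := fun z hz => by
    linarith [(abs_le.1 (abs_inner_sub_inner_le hν z y)).1]
  exact sub_le_holderConst_mul_of_isSupersolutionAt hβ₀ hβ₁ hβp (isClosed_closedHalfSpace ν)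
    hu.continuousOn
    (fun z _ hz _ => ⟨closedHalfSpace_mem_nhds (hball z hz), hu.isSupersolutionAt (hball z hz)⟩)
    (hball x le_rfl).le le_rfl

lemma sub_le_of_norm_sub_le (hu : IsHalfSpaceSolution p ν u) (hν : ‖ν‖ = 1) (hβ₀ : 0 < β)
    (hβ₁ : β < 1) (hβp : β * (p - 1) = 1) (hy : 0 < ⟪ν, y⟫) (hxy : ‖x - y‖ ≤ ⟪ν, y⟫) :
    u y - u x ≤ holderConst β (Module.finrank ℝ E) * ‖x - y‖ ^ (1 - β) := by
  have hsub : closedBall y ⟪ν, y⟫ ⊆ {z | 0 ≤ ⟪ν, z⟫} := fun z hz => by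
    rw [mem_closedBall, dist_eq_norm] at hz
    have := (abs_le.1 (abs_inner_sub_inner_le hν z y)).1
    simp only [mem_ofPred_eq]
    linarith
  have hrpow : Continuous fun z : E => ‖z - y‖ ^ (1 - β) :=
    (Real.continuous_rpow_const (sub_pos.2 hβ₁).le).comp (by fun_prop)
  have hclosure := closure_ball y hy.ne'
  refine le_on_closure (s := ball y ⟪ν, y⟫) (f := fun z => u y - u z)
    (fun z hz => hu.sub_le_of_norm_sub_lt hν hβ₀ hβ₁ hβp (by rwa [← dist_eq_norm]))
    (hclosure ▸ continuousOn_const.sub (hu.continuousOn.mono hsub))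
    (hrpow.const_mul _).continuousOn ?_
  rwa [hclosure, mem_closedBall, dist_eq_norm]

lemma neg_apply_le (hu : IsHalfSpaceSolution p ν u) (hν : ‖ν‖ = 1) (hβ₀ : 0 < β) (hβ₁ : β < 1)
    (hβp : β * (p - 1) = 1) (hx : 0 ≤ ⟪ν, x⟫) :
    -u x ≤ holderConst β (Module.finrank ℝ E) * ⟪ν, x⟫ ^ (1 - β) := by
  set y := x - ⟪ν, x⟫ • ν with hy_def
  have hνy : ⟪ν, y⟫ = 0 := by simp [hy_def, inner_sub_right, real_inner_smul_right, hν]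
  have hxy : ‖x - y‖ = ⟪ν, x⟫ := by
    rw [hy_def, sub_sub_cancel, norm_smul, hν, mul_one, Real.norm_of_nonneg hx]
  have huy : u y = 0 := hu.boundary y hνy
  have hbound := sub_le_holderConst_mul_of_isSupersolutionAt (y := y) (R := ⟪ν, x⟫) hβ₀ hβ₁ hβp
    (isClosed_closedHalfSpace ν) hu.continuousOn
    (fun z hz _ huz => by
      have hz_pos : 0 < ⟪ν, z⟫ := lt_of_le_of_ne hz fun h => by
        rw [hu.boundary z h.symm, huy] at huz
        exact huz.false
      exact ⟨closedHalfSpace_mem_nhds hz_pos, hu.isSupersolutionAt hz_pos⟩)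
    hx hxy.le
  rwa [hxy, huy, zero_sub] at hbound

lemma apply_le (hu : IsHalfSpaceSolution p ν u) (hν : ‖ν‖ = 1) (hβ₀ : 0 < β) (hβ₁ : β < 1)
    (hβp : β * (p - 1) = 1) (hx : 0 < ⟪ν, x⟫) :
    u x ≤ holderConst β (Module.finrank ℝ E) * ⟪ν, x⟫ ^ (1 - β) := by
  set y := x - ⟪ν, x⟫ • ν with hy_def
  have hνy : ⟪ν, y⟫ = 0 := by simp [hy_def, inner_sub_right, real_inner_smul_right, hν]
  have hyx : ‖y - x‖ = ⟪ν, x⟫ := by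
    rw [hy_def, sub_sub_cancel_left, norm_neg, norm_smul, hν, mul_one, Real.norm_of_nonneg hx.le]
  have hbound := hu.sub_le_of_norm_sub_le hν hβ₀ hβ₁ hβp hx hyx.le
  rwa [hyx, hu.boundary y hνy, sub_zero] at hbound

lemma abs_apply_le (hu : IsHalfSpaceSolution p ν u) (hν : ‖ν‖ = 1) (hβ₀ : 0 < β) (hβ₁ : β < 1)
    (hβp : β * (p - 1) = 1) (hx : 0 ≤ ⟪ν, x⟫) :
    |u x| ≤ holderConst β (Module.finrank ℝ E) * ⟪ν, x⟫ ^ (1 - β) := by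
  rw [abs_le]
  rcases hx.eq_or_lt with hzero | hpos
  · simp [hu.boundary x hzero.symm, ← hzero, Real.zero_rpow (sub_pos.2 hβ₁).ne']
  · exact ⟨neg_le_of_neg_le (hu.neg_apply_le hν hβ₀ hβ₁ hβp hx), hu.apply_le hν hβ₀ hβ₁ hβp hpos⟩

end IsHalfSpaceSolution

end HalfSpace

section Coupling

variable {E : Type*} [NormedAddCommGroup E] [InnerProductSpace ℝ E]

/-- The doubled functional whose minima compare `v` with `u` at distance `‖x - y‖`; the quadratic
term localises `x` near `x₀`. -/
def couplingFunctional (u v : E → ℝ) (f : ℝ → ℝ) (L : ℝ) (x₀ : E) (q : E × E) : ℝ :=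
  v q.2 - u q.1 + f ‖q.1 - q.2‖ + L * ‖q.1 - x₀‖ ^ 2

variable {u v : E → ℝ} {f f' : ℝ → ℝ} {f'' L : ℝ} {x₀ x y : E}

lemma hasLineJetAt_couplingFunctional (hxy : x ≠ y) (hu : ContDiffAt ℝ 2 u x)
    (hv : ContDiffAt ℝ 2 v y) (hf : ∀ᶠ s in 𝓝 ‖x - y‖, HasDerivAt f (f' s) s)
    (hf' : HasDerivAt f' f'' ‖x - y‖) :
    HasLineJetAt (couplingFunctional u v f L x₀)
      (fun a => fderiv ℝ v y a.2 - fderiv ℝ u x a.1 +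
        f' ‖x - y‖ * (⟪x - y, a.1 - a.2⟫ / ‖x - y‖) + L * (2 * ⟪x - x₀, a.1⟫))
      (fun a => iteratedFDeriv ℝ 2 v y ![a.2, a.2] - iteratedFDeriv ℝ 2 u x ![a.1, a.1] +
        radialHessian (f' ‖x - y‖) f'' (x - y) (a.1 - a.2) + L * (2 * ‖a.1‖ ^ 2)) (x, y) := by
  have hv' := (HasLineJetAt.of_contDiffAt hv).comp_affine (x := (x, y)) (A := Prod.snd)
    (B := Prod.snd) fun a t => by simp
  have hu' := (HasLineJetAt.of_contDiffAt hu).comp_affine (x := (x, y)) (A := Prod.fst)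
    (B := Prod.fst) fun a t => by simp
  have hdist := (hasLineJetAt_comp_norm (sub_ne_zero.2 hxy) hf hf').comp_affine (x := (x, y))
    (A := fun q => q.1 - q.2) (B := fun a => a.1 - a.2) fun a t => by simp; module
  have hloc := (hasLineJetAt_norm_sq (x - x₀)).comp_affine (x := (x, y))
    (A := fun q => q.1 - x₀) (B := Prod.fst) fun a t => add_sub_right_comm x (t • a.1) x₀
  exact ((hv'.sub hu').add hdist).add (hloc.const_mul L)

lemma radialHessian_sub_reflection (w a : E) (c c' : ℝ) :
    radialHessian c c' w (a - (ℝ ∙ w)ᗮ.reflection a) = 4 * c' * (⟪w, a⟫ / ‖w‖) ^ 2 := by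
  have hsub : a - (ℝ ∙ w)ᗮ.reflection a = (2 * (⟪w, a⟫ / ‖w‖ ^ 2)) • w := by
    rw [Submodule.reflection_orthogonal_apply, Submodule.reflection_singleton_apply]
    simp
    module
  rcases eq_or_ne w 0 with rfl | hw
  · simp [radialHessian]
  have hw' : ‖w‖ ≠ 0 := norm_ne_zero_iff.2 hw
  rw [hsub, radialHessian, norm_smul, real_inner_smul_right, real_inner_self_eq_norm_sq, mul_pow,
    Real.norm_eq_abs, sq_abs]
  field_simp
  ring

lemma norm_fderiv_eq_of_isLocalMin_couplingFunctional (hxy : x ≠ y) (hu : ContDiffAt ℝ 2 u x)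
    (hv : ContDiffAt ℝ 2 v y) (hf : ∀ᶠ s in 𝓝 ‖x - y‖, HasDerivAt f (f' s) s)
    (hf' : HasDerivAt f' f'' ‖x - y‖) (hmin : IsLocalMin (couplingFunctional u v f L x₀) (x, y)) :
    ‖fderiv ℝ v y‖ = |f' ‖x - y‖| := by
  have hjet := hasLineJetAt_couplingFunctional (L := L) (x₀ := x₀) hxy hu hv hf hf'
  have hr : ‖x - y‖ ≠ 0 := norm_ne_zero_iff.2 (sub_ne_zero.2 hxy)
  have heq : fderiv ℝ v y = (f' ‖x - y‖ / ‖x - y‖) • innerSL ℝ (x - y) := by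
    ext a
    have := hjet.fst_eq_zero_of_isLocalMin hmin (0, a)
    simp only [map_zero, zero_sub, inner_neg_right, inner_zero_right] at this
    simp only [smul_apply, innerSL_apply_apply, smul_eq_mul]
    linear_combination this
  rw [heq, norm_smul, innerSL_apply_norm, Real.norm_eq_abs, abs_div, abs_norm, div_mul_cancel₀ _ hr]

lemma norm_fderiv_sub_le_of_isLocalMin_couplingFunctional (hL : 0 ≤ L) (hxy : x ≠ y)
    (hu : ContDiffAt ℝ 2 u x) (hv : ContDiffAt ℝ 2 v y)
    (hf : ∀ᶠ s in 𝓝 ‖x - y‖, HasDerivAt f (f' s) s) (hf' : HasDerivAt f' f'' ‖x - y‖)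
    (hmin : IsLocalMin (couplingFunctional u v f L x₀) (x, y)) :
    ‖fderiv ℝ u x - fderiv ℝ v y‖ ≤ 2 * L * ‖x - x₀‖ := by
  have hjet := hasLineJetAt_couplingFunctional (L := L) (x₀ := x₀) hxy hu hv hf hf'
  have heq : fderiv ℝ u x - fderiv ℝ v y = (2 * L) • innerSL ℝ (x - x₀) := by
    ext a
    have := hjet.fst_eq_zero_of_isLocalMin hmin (a, a)
    simp only [sub_self, inner_zero_right] at this
    simp only [sub_apply, smul_apply, innerSL_apply_apply, smul_eq_mul]
    linear_combination -this
  rw [heq, norm_smul, innerSL_apply_norm, Real.norm_of_nonneg (by positivity)]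

/- In the directions `(b i, S (b i))`, with `S` the reflection that reverses `x - y`, the tangential
Hessian of `‖x - y‖` vanishes; only the concavity of `f` survives, with a factor `4`. -/
lemma laplacian_sub_le_of_isLocalMin_couplingFunctional [FiniteDimensional ℝ E] (hxy : x ≠ y)
    (hu : ContDiffAt ℝ 2 u x) (hv : ContDiffAt ℝ 2 v y)
    (hf : ∀ᶠ s in 𝓝 ‖x - y‖, HasDerivAt f (f' s) s) (hf' : HasDerivAt f' f'' ‖x - y‖)
    (hmin : IsLocalMin (couplingFunctional u v f L x₀) (x, y)) :
    Δ u x - Δ v y ≤ 4 * f'' + 2 * L * Module.finrank ℝ E := by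
  set b := stdOrthonormalBasis ℝ E
  set S := (ℝ ∙ (x - y))ᗮ.reflection
  have hsum := Finset.sum_nonneg fun i (_ : i ∈ Finset.univ) =>
    (hasLineJetAt_couplingFunctional (L := L) (x₀ := x₀) hxy hu hv hf
      hf').snd_nonneg_of_isLocalMin hmin (b i, S (b i))
  have hv_trace : ∑ i, iteratedFDeriv ℝ 2 v y ![S (b i), S (b i)] = Δ v y := by
    simp [laplacian_eq_sum_orthonormalBasis v y (b.map S)]
  simp only [S, radialHessian_sub_reflection] at hsum
  rw [Finset.sum_add_distrib, Finset.sum_add_distrib, Finset.sum_sub_distrib, hv_trace,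
    ← laplacian_eq_sum_orthonormalBasis, ← Finset.mul_sum, ← Finset.mul_sum, ← Finset.mul_sum,
    sum_inner_div_norm_sq b (sub_ne_zero.2 hxy), sum_norm_sq_orthonormalBasis] at hsum
  linarith

end Coupling

section RealInequalities

lemma rpow_add_sub_rpow_le {p G ξ : ℝ} (hp : 1 ≤ p) (hG : 0 ≤ G) (hξ : 0 ≤ ξ) :
    (G + ξ) ^ p - G ^ p ≤ p * ξ * (G + ξ) ^ (p - 1) := by
  rcases (add_nonneg hG hξ).eq_or_lt with hzero | hpos
  · obtain rfl : G = 0 := by linarith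
    obtain rfl : ξ = 0 := by linarith
    simp
  · have hbernoulli := one_add_mul_self_le_rpow_one_add (s := -(ξ / (G + ξ)))
      (neg_le_neg ((div_le_one hpos).2 (by linarith))) hp
    have hratio : 1 + -(ξ / (G + ξ)) = G / (G + ξ) := by
      field_simp
      ring
    rw [hratio, Real.div_rpow hG hpos.le, le_div_iff₀ (Real.rpow_pos_of_pos hpos p)] at hbernoulli
    rw [Real.rpow_sub_one hpos.ne']
    calc (G + ξ) ^ p - G ^ p ≤ p * (ξ / (G + ξ)) * (G + ξ) ^ p := by linarith
      _ = p * ξ * ((G + ξ) ^ p / (G + ξ)) := by ring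

lemma pos_and_lt_of_mul_rpow_lt {β C K r : ℝ} (hβ₀ : 0 < β) (hβ₁ : β < 1) (hK : 0 < K)
    (hr : 0 ≤ r) (h : K * r ^ (1 - β / 2) < C * r ^ (1 - β)) :
    0 < r ∧ r < (C / K) ^ (2 / β) := by
  have hr_pos : 0 < r := hr.lt_of_ne' fun h0 => by
    rw [h0, Real.zero_rpow (by linarith), Real.zero_rpow (by linarith)] at h
    linarith
  refine ⟨hr_pos, ?_⟩
  have hsplit : r ^ (1 - β / 2) = r ^ (β / 2) * r ^ (1 - β) := by
    rw [← Real.rpow_add hr_pos]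
    ring_nf
  rw [hsplit, ← mul_assoc] at h
  have hlt := lt_of_mul_lt_mul_right h (Real.rpow_nonneg hr _)
  calc r = (r ^ (β / 2)) ^ (2 / β) := by
        rw [← Real.rpow_mul hr, div_mul_div_comm, mul_comm β, div_self (by positivity),
          Real.rpow_one]
    _ < (C / K) ^ (2 / β) :=
        Real.rpow_lt_rpow (by positivity) ((lt_div_iff₀' hK).2 hlt) (by positivity)

lemma mul_rpow_neg_add_rpow_le {p β K r r₁ ξ : ℝ} (hβp : β * (p - 1) = 1) (hp : 1 ≤ p)
    (hK : 0 ≤ K) (hr : 0 < r) (hrr₁ : r ≤ r₁) (hβ : 0 ≤ β) (hξ₀ : 0 ≤ ξ) (hξ₁ : ξ ≤ 1) :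
    (K * r ^ (-(β / 2)) + ξ) ^ (p - 1) ≤
      r ^ (-(1 / 2) : ℝ) * (K + r₁ ^ (β / 2)) ^ (p - 1) := by
  have hr₁ : 0 < r₁ := hr.trans_le hrr₁
  have hhalf : r ^ (-(1 / 2) : ℝ) = (r ^ (-(β / 2))) ^ (p - 1) := by
    rw [← Real.rpow_mul hr.le]
    congr 1
    linarith
  have hcancel : r ^ (-(β / 2)) * r ^ (β / 2) = 1 := by
    rw [← Real.rpow_add hr, neg_add_cancel, Real.rpow_zero]
  rw [hhalf, ← Real.mul_rpow (by positivity) (by positivity)]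
  refine Real.rpow_le_rpow (by positivity) ?_ (by linarith)
  calc K * r ^ (-(β / 2)) + ξ
      ≤ K * r ^ (-(β / 2)) + r ^ (-(β / 2)) * r ^ (β / 2) := by rw [hcancel]; gcongr
    _ ≤ K * r ^ (-(β / 2)) + r ^ (-(β / 2)) * r₁ ^ (β / 2) := by gcongr
    _ = r ^ (-(β / 2)) * (K + r₁ ^ (β / 2)) := by ring

/- With `δ = 1 - β / 2` the derivative `K * δ * r ^ (δ - 1)` of `K * r ^ δ`, raised to the power
`p - 1`, is of order `r ^ (-1 / 2)`, which is dominated by `r ^ (δ - 2)` as `r → 0`. -/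
lemma exists_forall_lt_mul_rpow_sub_two {p β K N r₁ : ℝ} (hβ₀ : 0 < β) (hβ₁ : β < 1)
    (hβp : β * (p - 1) = 1) (hK : 0 < K) (hN : 0 ≤ N) (hr₁ : 0 < r₁) :
    ∃ τ > 0, ∀ r ξ L : ℝ, 0 < r → r ≤ r₁ → 0 ≤ ξ → ξ ≤ τ → L ≤ τ →
      2 * L * N + p * ξ * (K * (1 - β / 2) * r ^ (-(β / 2)) + ξ) ^ (p - 1) <
        4 * (K * (1 - β / 2) * (β / 2)) * r ^ (-(β / 2) - 1) := by
  have hp : 1 < p := one_lt_of_mul_sub_one_eq_one hβ₀ hβp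
  have hδ : 0 < 1 - β / 2 := by linarith
  set A := 4 * (K * (1 - β / 2) * (β / 2))
  have : 0 < A := by positivity
  set Q := (K * (1 - β / 2) + r₁ ^ (β / 2)) ^ (p - 1) with hQ_def
  have : 0 ≤ Q := by positivity
  set W := 2 * N * r₁ ^ (β / 2 + 1) + p * Q * r₁ ^ (β / 2 + 1 / 2) with hW_def
  have : 0 ≤ W := by positivity
  refine ⟨min 1 (A / (W + 1)), lt_min one_pos (by positivity), fun r ξ L hr hrr₁ hξ hξτ hLτ => ?_⟩
  set τ := min 1 (A / (W + 1))
  have hτ : 0 < τ := lt_min one_pos (by positivity)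
  have hgrad := mul_rpow_neg_add_rpow_le (K := K * (1 - β / 2)) hβp (by linarith) (by positivity) hr
    hrr₁ hβ₀.le hξ (hξτ.trans (min_le_left _ _))
  rw [← hQ_def] at hgrad
  have hcancel : r ^ (β / 2 + 1) * r ^ (-(β / 2) - 1) = 1 := by
    rw [← Real.rpow_add hr]
    ring_nf
    exact Real.rpow_zero r
  have hcombine : r ^ (β / 2 + 1) * r ^ (-(1 / 2) : ℝ) = r ^ (β / 2 + 1 / 2) := by
    rw [← Real.rpow_add hr]
    ring_nf
  refine lt_of_mul_lt_mul_left ?_ (Real.rpow_nonneg hr.le (β / 2 + 1))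
  calc r ^ (β / 2 + 1) *
        (2 * L * N + p * ξ * (K * (1 - β / 2) * r ^ (-(β / 2)) + ξ) ^ (p - 1))
      ≤ r ^ (β / 2 + 1) * (2 * τ * N + p * τ * (r ^ (-(1 / 2) : ℝ) * Q)) := by gcongr
    _ = τ * (2 * N * r ^ (β / 2 + 1) + p * Q * r ^ (β / 2 + 1 / 2)) := by
        rw [← hcombine]
        ring
    _ ≤ τ * W := by
        rw [hW_def]
        gcongr
    _ < τ * (W + 1) := by linarith
    _ ≤ A := (le_div_iff₀ (by positivity)).1 (min_le_right _ _)
    _ = r ^ (β / 2 + 1) * (A * r ^ (-(β / 2) - 1)) := by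
        rw [mul_left_comm, hcancel, mul_one]

end RealInequalities

section Decay

variable {E : Type*} [NormedAddCommGroup E] {p β K L R : ℝ} {ν x₀ y₀ x y : E} {u : E → ℝ}

/-- The pairs `(x, y)` over which the coupling functional centred at `x₀` is minimised. -/
def couplingDomain (x₀ : E) (R : ℝ) : Set (E × E) := {q | ‖q.1 - x₀‖ ≤ R ∧ ‖q.1 - q.2‖ ≤ R}

lemma couplingDomain_mem_nhds (hx : ‖x - x₀‖ < R) (hxy : ‖x - y‖ < R) :
    couplingDomain x₀ R ∈ 𝓝 (x, y) := by
  have hfst : ∀ᶠ q : E × E in 𝓝 (x, y), ‖q.1 - x₀‖ < R :=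
    (isOpen_lt (by fun_prop) continuous_const).mem_nhds hx
  have hdist : ∀ᶠ q : E × E in 𝓝 (x, y), ‖q.1 - q.2‖ < R :=
    (isOpen_lt (by fun_prop) continuous_const).mem_nhds hxy
  filter_upwards [hfst, hdist] with q h₁ h₂ using ⟨h₁.le, h₂.le⟩

variable [InnerProductSpace ℝ E]

lemma inner_bounds_of_mem_couplingDomain (hν : ‖ν‖ = 1) (hx₀ : 4 * R ≤ ⟪ν, x₀⟫) {q : E × E}
    (hq : q ∈ couplingDomain x₀ R) : 3 * R ≤ ⟪ν, q.1⟫ ∧ 2 * R ≤ ⟪ν, q.2⟫ := by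
  have h₁ := (abs_le.1 (abs_inner_sub_inner_le hν q.1 x₀)).1
  have h₂ := (abs_le.1 (abs_inner_sub_inner_le hν q.1 q.2)).2
  constructor <;> linarith [hq.1, hq.2]

variable [FiniteDimensional ℝ E]

lemma isCompact_couplingDomain (x₀ : E) (R : ℝ) : IsCompact (couplingDomain x₀ R) := by
  have hclosed : IsClosed ({q : E × E | ‖q.1 - x₀‖ ≤ R} ∩ {q | ‖q.1 - q.2‖ ≤ R}) :=
    (isClosed_le (by fun_prop) continuous_const).inter (isClosed_le (by fun_prop) continuous_const)
  refine (isCompact_closedBall (x₀, x₀) (2 * R)).of_isClosed_subset hclosed fun q hq => ?_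
  rw [mem_closedBall, Prod.dist_eq, max_le_iff, dist_eq_norm, dist_eq_norm]
  have hR : 0 ≤ R := (norm_nonneg _).trans hq.1
  refine ⟨hq.1.trans (by linarith), ?_⟩
  calc ‖q.2 - x₀‖ ≤ ‖q.2 - q.1‖ + ‖q.1 - x₀‖ := norm_sub_le_norm_sub_add_norm_sub _ _ _
    _ ≤ 2 * R := by
      rw [norm_sub_rev]
      linarith [hq.1, hq.2]

namespace IsHalfSpaceSolution

lemma continuousOn_couplingFunctional (hu : IsHalfSpaceSolution p ν u) (hν : ‖ν‖ = 1) {f : ℝ → ℝ}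
    (hf : Continuous f) (hR : 0 ≤ R) (hx₀ : 4 * R ≤ ⟪ν, x₀⟫) :
    ContinuousOn (couplingFunctional u u f L x₀) (couplingDomain x₀ R) := by
  have hfst : ContinuousOn (fun q : E × E => u q.1) (couplingDomain x₀ R) :=
    hu.continuousOn.comp continuous_fst.continuousOn fun q hq =>
      (by positivity : 0 ≤ 3 * R).trans (inner_bounds_of_mem_couplingDomain hν hx₀ hq).1
  have hsnd : ContinuousOn (fun q : E × E => u q.2) (couplingDomain x₀ R) :=
    hu.continuousOn.comp continuous_snd.continuousOn fun q hq =>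
      (by positivity : 0 ≤ 2 * R).trans (inner_bounds_of_mem_couplingDomain hν hx₀ hq).2
  have hdist : Continuous fun q : E × E => f ‖q.1 - q.2‖ := hf.comp (by fun_prop)
  exact ((hsnd.sub hfst).add hdist.continuousOn).add (by fun_prop)

lemma exists_isLocalMin_couplingFunctional (hu : IsHalfSpaceSolution p ν u) (hν : ‖ν‖ = 1)
    (hβ₀ : 0 < β) (hβ₁ : β < 1) (hβp : β * (p - 1) = 1) (hK : 0 < K) (hR : 0 < R)
    (hx₀ : 4 * R ≤ ⟪ν, x₀⟫) (hxy₀ : ‖x₀ - y₀‖ ≤ R)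
    (hL : holderConst β (Module.finrank ℝ E) * R ^ (1 - β) ≤ L * R ^ 2)
    (hRK : (holderConst β (Module.finrank ℝ E) / K) ^ (2 / β) ≤ R)
    (hlt : K * ‖x₀ - y₀‖ ^ (1 - β / 2) < u x₀ - u y₀) :
    ∃ x y, IsLocalMin (couplingFunctional u u (fun r => K * r ^ (1 - β / 2)) L x₀) (x, y) ∧
      0 < ⟪ν, x⟫ ∧ 0 < ⟪ν, y⟫ ∧ x ≠ y ∧ ‖x - x₀‖ ≤ R ∧
      ‖x - y‖ ≤ (holderConst β (Module.finrank ℝ E) / K) ^ (2 / β) := by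
  set C := holderConst β (Module.finrank ℝ E)
  have hC : 0 < C := holderConst_pos hβ₁ (Nat.cast_nonneg _)
  have hL₀ : 0 ≤ L := nonneg_of_mul_nonneg_left
    ((by positivity : 0 ≤ C * R ^ (1 - β)).trans hL) (by positivity)
  have hf : Continuous fun r : ℝ => K * r ^ (1 - β / 2) :=
    (Real.continuous_rpow_const (by linarith)).const_mul K
  have hmem₀ : (x₀, y₀) ∈ couplingDomain x₀ R := ⟨by simpa using hR.le, hxy₀⟩
  obtain ⟨⟨x, y⟩, hq, hmin⟩ := (isCompact_couplingDomain x₀ R).exists_isMinOn ⟨_, hmem₀⟩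
    (hu.continuousOn_couplingFunctional (L := L) hν hf hR.le hx₀)
  obtain ⟨hxpos, hypos⟩ := inner_bounds_of_mem_couplingDomain hν hx₀ hq
  obtain ⟨hxR, hxyR⟩ := hq
  simp only at hxpos hypos hxR hxyR
  have hholder : u x - u y ≤ C * ‖x - y‖ ^ (1 - β) := by
    rw [norm_sub_rev]
    exact hu.sub_le_of_norm_sub_le hν hβ₀ hβ₁ hβp (by linarith) (by rw [norm_sub_rev]; linarith)
  have hbound : K * ‖x - y‖ ^ (1 - β / 2) + L * ‖x - x₀‖ ^ 2 < C * ‖x - y‖ ^ (1 - β) := by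
    have hle := hmin hmem₀
    simp only [couplingFunctional, sub_self, norm_zero, mem_ofPred_eq] at hle
    linarith
  have hLterm : 0 ≤ L * ‖x - x₀‖ ^ 2 := by positivity
  obtain ⟨hr, hrK⟩ := pos_and_lt_of_mul_rpow_lt (C := C) hβ₀ hβ₁ hK (norm_nonneg (x - y))
    (by linarith)
  have hxR' : ‖x - x₀‖ < R := hxR.lt_of_ne fun heq => by
    rw [heq] at hbound
    have hmono : C * ‖x - y‖ ^ (1 - β) ≤ C * R ^ (1 - β) := by gcongr
    have hKterm : 0 < K * ‖x - y‖ ^ (1 - β / 2) := by positivity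
    linarith
  exact ⟨x, y, hmin.isLocalMin (couplingDomain_mem_nhds hxR' (hrK.trans_le hRK)), by linarith,
    by linarith, sub_ne_zero.1 (norm_pos_iff.1 hr), hxR, hrK.le⟩

lemma mul_rpow_le_of_isLocalMin_couplingFunctional (hu : IsHalfSpaceSolution p ν u)
    (hβ₀ : 0 < β) (hβ₁ : β < 1) (hp : 1 ≤ p) (hK : 0 < K) (hL : 0 ≤ L) (hx : 0 < ⟪ν, x⟫)
    (hy : 0 < ⟪ν, y⟫) (hxy : x ≠ y)
    (hmin : IsLocalMin (couplingFunctional u u (fun r => K * r ^ (1 - β / 2)) L x₀) (x, y)) :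
    4 * (K * (1 - β / 2) * (β / 2)) * ‖x - y‖ ^ (-(β / 2) - 1) ≤
      2 * L * Module.finrank ℝ E + p * (2 * L * ‖x - x₀‖) *
        (K * (1 - β / 2) * ‖x - y‖ ^ (-(β / 2)) + 2 * L * ‖x - x₀‖) ^ (p - 1) := by
  have hr : 0 < ‖x - y‖ := norm_pos_iff.2 (sub_ne_zero.2 hxy)
  have hf : ∀ᶠ s in 𝓝 ‖x - y‖, HasDerivAt (fun r : ℝ => K * r ^ (1 - β / 2))
      (K * (1 - β / 2) * s ^ (-(β / 2))) s := by
    filter_upwards [lt_mem_nhds hr] with s hs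
    refine ((Real.hasDerivAt_rpow_const (Or.inl hs.ne')).const_mul K).congr_deriv ?_
    rw [mul_assoc]
    ring_nf
  have hf' : HasDerivAt (fun s : ℝ => K * (1 - β / 2) * s ^ (-(β / 2)))
      (-(K * (1 - β / 2) * (β / 2) * ‖x - y‖ ^ (-(β / 2) - 1))) ‖x - y‖ := by
    refine ((Real.hasDerivAt_rpow_const (Or.inl hr.ne')).const_mul _).congr_deriv ?_
    ring
  set G := K * (1 - β / 2) * ‖x - y‖ ^ (-(β / 2)) with hG_def
  have hG : 0 ≤ G := mul_nonneg (mul_nonneg hK.le (by linarith)) (by positivity)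
  have hξ : 0 ≤ 2 * L * ‖x - x₀‖ := by positivity
  have hgrad_y : ‖fderiv ℝ u y‖ = G := by
    rw [norm_fderiv_eq_of_isLocalMin_couplingFunctional hxy (hu.contDiffAt hx) (hu.contDiffAt hy)
      hf hf' hmin, ← hG_def, abs_of_nonneg hG]
  have hgrad_x : ‖fderiv ℝ u x‖ ≤ G + 2 * L * ‖x - x₀‖ := by
    have hsub := norm_fderiv_sub_le_of_isLocalMin_couplingFunctional hL hxy (hu.contDiffAt hx)
      (hu.contDiffAt hy) hf hf' hmin
    linarith [norm_le_norm_sub_add (fderiv ℝ u x) (fderiv ℝ u y)]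
  have hpow : ‖fderiv ℝ u x‖ ^ p ≤ (G + 2 * L * ‖x - x₀‖) ^ p :=
    Real.rpow_le_rpow (norm_nonneg _) hgrad_x (by linarith)
  have hlap := laplacian_sub_le_of_isLocalMin_couplingFunctional hxy (hu.contDiffAt hx)
    (hu.contDiffAt hy) hf hf' hmin
  have hx_eq := hu.neg_laplacian x hx
  have hy_eq := hu.neg_laplacian y hy
  rw [hgrad_y] at hy_eq
  linarith [rpow_add_sub_rpow_le hp hG hξ]

theorem exists_forall_sub_le_mul_rpow (hu : IsHalfSpaceSolution p ν u) (hν : ‖ν‖ = 1)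
    (hβ₀ : 0 < β) (hβ₁ : β < 1) (hβp : β * (p - 1) = 1) (hK : 0 < K) (d : ℝ) :
    ∃ R₀ : ℝ, ∀ x y : E, R₀ ≤ ⟪ν, x⟫ → ‖x - y‖ ≤ d →
      u x - u y ≤ K * ‖x - y‖ ^ (1 - β / 2) := by
  set C := holderConst β (Module.finrank ℝ E)
  have hC : 0 < C := holderConst_pos hβ₁ (Nat.cast_nonneg _)
  obtain ⟨τ, hτ, hstrict⟩ := exists_forall_lt_mul_rpow_sub_two hβ₀ hβ₁ hβp hK
    (Nat.cast_nonneg (Module.finrank ℝ E)) (by positivity : 0 < (C / K) ^ (2 / β))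
  have hsmall : Tendsto (fun R : ℝ => 2 * C * R ^ (-β)) atTop (𝓝 0) := by
    simpa using (tendsto_rpow_neg_atTop hβ₀).const_mul (2 * C)
  obtain ⟨R, hR, hRd, hRK, hRτ⟩ := ((eventually_ge_atTop 1).and <| (eventually_ge_atTop d).and <|
    (eventually_ge_atTop ((C / K) ^ (2 / β))).and (hsmall.eventually (ge_mem_nhds hτ))).exists
  have hR₀ : 0 < R := by linarith
  refine ⟨4 * R, fun x₀ y₀ hx₀ hxy₀ => ?_⟩
  by_contra! hlt
  have hLR : C * R ^ (-β - 1) * R = C * R ^ (-β) := by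
    rw [mul_assoc, ← Real.rpow_add_one hR₀.ne', sub_add_cancel]
  have hLR₂ : C * R ^ (-β - 1) * R ^ 2 = C * R ^ (1 - β) := by
    rw [sq, ← mul_assoc, hLR, mul_assoc, ← Real.rpow_add_one hR₀.ne', neg_add_eq_sub]
  obtain ⟨x, y, hmin, hx, hy, hxy, hxR, hr⟩ := hu.exists_isLocalMin_couplingFunctional hν hβ₀ hβ₁
    hβp hK hR₀ hx₀ (hxy₀.trans hRd) hLR₂.ge hRK hlt
  set L := C * R ^ (-β - 1)
  have hL : 0 ≤ L := by positivity
  have hξ : 2 * L * ‖x - x₀‖ ≤ τ := by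
    calc 2 * L * ‖x - x₀‖ ≤ 2 * L * R := by gcongr
      _ = 2 * C * R ^ (-β) := by rw [mul_assoc, hLR, mul_assoc]
      _ ≤ τ := hRτ
  have hLτ : L ≤ τ := by
    have hLRL : L ≤ L * R := le_mul_of_one_le_right hL hR
    linarith
  exact (hstrict ‖x - y‖ (2 * L * ‖x - x₀‖) L (norm_pos_iff.2 (sub_ne_zero.2 hxy)) hr
    (by positivity) hξ hLτ).not_ge (hu.mul_rpow_le_of_isLocalMin_couplingFunctional hβ₀ hβ₁
      (one_lt_of_mul_sub_one_eq_one hβ₀ hβp).le hK hL hx hy hxy hmin)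

theorem exists_forall_sub_le (hu : IsHalfSpaceSolution p ν u) (hν : ‖ν‖ = 1) (hβ₀ : 0 < β)
    (hβ₁ : β < 1) (hβp : β * (p - 1) = 1) (h : E) {ε : ℝ} (hε : 0 < ε) :
    ∃ R₀ : ℝ, ∀ x : E, R₀ ≤ ⟪ν, x⟫ → u x - u (x + h) ≤ ε := by
  rcases eq_or_ne h 0 with rfl | hh
  · exact ⟨0, fun x _ => by simpa using hε.le⟩
  have hh' : 0 < ‖h‖ ^ (1 - β / 2) := Real.rpow_pos_of_pos (norm_pos_iff.2 hh) _
  obtain ⟨R₀, hR₀⟩ := hu.exists_forall_sub_le_mul_rpow hν hβ₀ hβ₁ hβp (div_pos hε hh') ‖h‖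
  refine ⟨R₀, fun x hx => ?_⟩
  simpa [div_mul_cancel₀ _ hh'.ne'] using hR₀ x (x + h) hx (by simp)

end IsHalfSpaceSolution

end Decay

section Comparison

lemma norm_smul_add_rpow_le {V : Type*} [NormedAddCommGroup V] [NormedSpace ℝ V] {p s : ℝ}
    (hp : 1 ≤ p) (hs₀ : 0 < s) (hs₁ : s < 1) (b ξ : V) :
    ‖(1 - s) • b + ξ‖ ^ p ≤ (1 - s) * ‖b‖ ^ p + s * (‖ξ‖ / s) ^ p := by
  have hs : 0 < 1 - s := sub_pos.2 hs₁
  have hnorm : ‖(1 - s) • b + ξ‖ ≤ (1 - s) * ‖b‖ + s * (‖ξ‖ / s) := by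
    rw [mul_div_cancel₀ _ hs₀.ne', ← Real.norm_of_nonneg hs.le, ← norm_smul,
      Real.norm_of_nonneg hs.le]
    exact norm_add_le _ _
  calc ‖(1 - s) • b + ξ‖ ^ p ≤ ((1 - s) * ‖b‖ + s * (‖ξ‖ / s)) ^ p :=
        Real.rpow_le_rpow (norm_nonneg _) hnorm (by linarith)
    _ ≤ (1 - s) * ‖b‖ ^ p + s * (‖ξ‖ / s) ^ p :=
        (convexOn_rpow hp).2 (norm_nonneg b) (div_nonneg (norm_nonneg ξ) hs₀.le) hs.le hs₀.le
          (by ring)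

lemma exists_pos_mul_rpow_lt {p s R σ : ℝ} (hp : 1 < p) (hs : 0 < s) (hR : 0 < R) (hσ : 0 < σ) :
    ∃ η > 0, η * R ^ 2 ≤ σ ∧ s * (4 * η * R / s) ^ p < η := by
  have hquad : Tendsto (fun η : ℝ => η * R ^ 2) (𝓝[>] 0) (𝓝 0) := by
    have hcont : Continuous fun η : ℝ => η * R ^ 2 := by fun_prop
    simpa using (hcont.tendsto 0).mono_left nhdsWithin_le_nhds
  have hpow : Tendsto (fun η : ℝ => s * (4 * R / s) ^ p * η ^ (p - 1)) (𝓝[>] 0) (𝓝 0) := by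
    have hcont : Continuous fun η : ℝ => s * (4 * R / s) ^ p * η ^ (p - 1) :=
      continuous_const.mul (Real.continuous_rpow_const (by linarith))
    simpa [Real.zero_rpow (sub_pos.2 hp).ne'] using
      (hcont.tendsto 0).mono_left (nhdsWithin_le_nhds (s := Ioi 0))
  obtain ⟨η, hη, hησ, hη₁⟩ := (eventually_mem_nhdsWithin.and <|
    (hquad.eventually (ge_mem_nhds hσ)).and (hpow.eventually (gt_mem_nhds one_pos))).exists
  have hη : 0 < η := hη
  refine ⟨η, hη, hησ, ?_⟩
  calc s * (4 * η * R / s) ^ p = s * (4 * R / s) ^ p * η ^ (p - 1) * η := by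
        rw [mul_assoc (s * _), ← Real.rpow_add_one hη.ne', sub_add_cancel, mul_assoc s,
          ← Real.mul_rpow (by positivity) hη.le]
        ring_nf
    _ < η := mul_lt_of_lt_one_left hη hη₁

lemma exists_radius_and_curvature {a b M N : ℝ} (ha : 0 < a) (hb : 0 < b) (hM : 0 < M) :
    ∃ ρ > 0, ∃ κ > 0, κ * ρ ^ 2 = M ∧ κ * ρ ≤ a ∧ κ * N ≤ b := by
  have hlin : Tendsto (fun ρ : ℝ => M / ρ) atTop (𝓝 0) := tendsto_const_nhds.div_atTop tendsto_id
  have hquad : Tendsto (fun ρ : ℝ => M * N / ρ ^ 2) atTop (𝓝 0) :=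
    tendsto_const_nhds.div_atTop (tendsto_pow_atTop two_ne_zero)
  obtain ⟨ρ, hρ, hρa, hρb⟩ := ((eventually_gt_atTop 0).and <|
    (hlin.eventually (ge_mem_nhds ha)).and (hquad.eventually (ge_mem_nhds hb))).exists
  refine ⟨ρ, hρ, M / ρ ^ 2, by positivity, div_mul_cancel₀ _ (by positivity), ?_, ?_⟩
  · rwa [sq, ← div_div, div_mul_cancel₀ _ hρ.ne']
  · rwa [div_mul_eq_mul_div]

variable {E : Type*} [NormedAddCommGroup E] [InnerProductSpace ℝ E]
  {p s η κ ρ R B c : ℝ} {ν x x₁ : E} {u v : E → ℝ}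

/-- The slab between the boundary of the half-space `{x | 0 < ⟪ν, x⟫}` and its translate by
`R • ν`. -/
def slab (ν : E) (R : ℝ) : Set E := {x | 0 ≤ ⟪ν, x⟫ ∧ ⟪ν, x⟫ ≤ R}

/-- The functional minimised in the comparison principle. The factor `1 - s` leaves room, by
convexity of `t ↦ tᵖ`, for the gradients of the two quadratic terms: `η` makes the comparison strict
and `κ` localises it. -/
def comparisonFunctional (ν x₁ : E) (s η κ : ℝ) (u v : E → ℝ) (z : E) : ℝ :=
  (1 - s) * u z - v z + κ * ‖z - x₁‖ ^ 2 - η * ⟪ν, z⟫ ^ 2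

lemma hasLineJetAt_inner_sq (ν x : E) : HasLineJetAt (fun z => ⟪ν, z⟫ ^ 2)
    (fun a => 2 * ⟪ν, x⟫ * ⟪ν, a⟫) (fun a => 2 * ⟪ν, a⟫ ^ 2) x :=
  hasLineJetAt_comp_inner (g := fun t => t ^ 2) (g' := fun t => 2 * t)
    (Eventually.of_forall fun t => by simpa using hasDerivAt_pow 2 t)
    (by simpa using (hasDerivAt_id ⟪ν, x⟫).const_mul (2 : ℝ))

lemma hasLineJetAt_comparisonFunctional (hu : ContDiffAt ℝ 2 u x) (hv : ContDiffAt ℝ 2 v x) :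
    HasLineJetAt (comparisonFunctional ν x₁ s η κ u v)
      (fun a => (1 - s) * fderiv ℝ u x a - fderiv ℝ v x a + κ * (2 * ⟪x - x₁, a⟫) -
        η * (2 * ⟪ν, x⟫ * ⟪ν, a⟫))
      (fun a => (1 - s) * iteratedFDeriv ℝ 2 u x ![a, a] - iteratedFDeriv ℝ 2 v x ![a, a] +
        κ * (2 * ‖a‖ ^ 2) - η * (2 * ⟪ν, a⟫ ^ 2)) x :=
  ((((HasLineJetAt.of_contDiffAt hu).const_mul (1 - s)).sub (HasLineJetAt.of_contDiffAt hv)).add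
    ((hasLineJetAt_norm_sub_sq x₁ x).const_mul κ)).sub ((hasLineJetAt_inner_sq ν x).const_mul η)

lemma fderiv_eq_of_isLocalMin_comparisonFunctional (hu : ContDiffAt ℝ 2 u x)
    (hv : ContDiffAt ℝ 2 v x) (hmin : IsLocalMin (comparisonFunctional ν x₁ s η κ u v) x) :
    fderiv ℝ v x = (1 - s) • fderiv ℝ u x +
      innerSL ℝ ((2 * κ) • (x - x₁) - (2 * η * ⟪ν, x⟫) • ν) := by
  ext a
  have hzero := (hasLineJetAt_comparisonFunctional hu hv).fst_eq_zero_of_isLocalMin hmin a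
  rw [add_apply, smul_apply, innerSL_apply_apply,
    inner_sub_left, real_inner_smul_left, real_inner_smul_left, smul_eq_mul]
  linarith

variable [FiniteDimensional ℝ E]

lemma laplacian_le_of_isLocalMin_comparisonFunctional (hν : ‖ν‖ = 1) (hu : ContDiffAt ℝ 2 u x)
    (hv : ContDiffAt ℝ 2 v x) (hmin : IsLocalMin (comparisonFunctional ν x₁ s η κ u v) x) :
    Δ v x ≤ (1 - s) * Δ u x + 2 * κ * Module.finrank ℝ E - 2 * η := by
  have hnonneg := (hasLineJetAt_comparisonFunctional hu hv).snd_nonneg_of_isLocalMin hmin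
  set b := stdOrthonormalBasis ℝ E
  have hsum := Finset.sum_nonneg fun i (_ : i ∈ Finset.univ) => hnonneg (b i)
  simp only [Finset.sum_sub_distrib, Finset.sum_add_distrib, ← Finset.mul_sum,
    sum_norm_sq_orthonormalBasis, b.sum_sq_inner_left, hν,
    ← laplacian_eq_sum_orthonormalBasis] at hsum
  linarith

lemma le_mul_rpow_of_isLocalMin_comparisonFunctional (hp : 1 ≤ p) (hν : ‖ν‖ = 1) (hs₀ : 0 < s)
    (hs₁ : s < 1) (hη : 0 ≤ η) (hκ : 0 ≤ κ) (hu : IsSupersolutionAt p u x)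
    (hv : IsSubsolutionAt p v x)
    (hmin : IsLocalMin (comparisonFunctional ν x₁ s η κ u v) x) :
    2 * η - 2 * κ * Module.finrank ℝ E ≤
      s * ((2 * κ * ‖x - x₁‖ + 2 * η * |⟪ν, x⟫|) / s) ^ p := by
  set w := (2 * κ) • (x - x₁) - (2 * η * ⟪ν, x⟫) • ν
  have hw : ‖w‖ ≤ 2 * κ * ‖x - x₁‖ + 2 * η * |⟪ν, x⟫| := by
    refine (norm_sub_le _ _).trans_eq ?_
    rw [norm_smul, norm_smul, hν, mul_one, Real.norm_eq_abs, Real.norm_eq_abs, abs_mul (2 * η),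
      abs_of_nonneg (by positivity), abs_of_nonneg (by positivity)]
  have hconvex := norm_smul_add_rpow_le hp hs₀ hs₁ (fderiv ℝ u x) (innerSL ℝ w)
  rw [← fderiv_eq_of_isLocalMin_comparisonFunctional hu.1 hv.1 hmin, innerSL_apply_norm] at hconvex
  have hmono : s * (‖w‖ / s) ^ p ≤ s * ((2 * κ * ‖x - x₁‖ + 2 * η * |⟪ν, x⟫|) / s) ^ p := by
    gcongr
  have hlap := laplacian_le_of_isLocalMin_comparisonFunctional hν hu.1 hv.1 hmin
  have hsuper := mul_le_mul_of_nonneg_left hu.2 (sub_pos.2 hs₁).le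
  linarith [hv.2]

lemma exists_isLocalMin_comparisonFunctional (hu : ContinuousOn u (slab ν R))
    (hv : ContinuousOn v (slab ν R)) (huB : ∀ z ∈ slab ν R, |u z| ≤ B)
    (hvB : ∀ z ∈ slab ν R, |v z| ≤ B) (hbot : ∀ z, ⟪ν, z⟫ = 0 → v z ≤ u z + c)
    (htop : ∀ z, ⟪ν, z⟫ = R → v z ≤ u z + c) (hx₁ : x₁ ∈ slab ν R) (hs : 0 ≤ s) (hη : 0 ≤ η)
    (hκ : 0 ≤ κ) (hρ : 0 < ρ) (hκρ : 2 * B ≤ c + κ * ρ ^ 2)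
    (hσ : 2 * (s * B) + η * R ^ 2 < v x₁ - u x₁ - c) :
    ∃ x, 0 < ⟪ν, x⟫ ∧ ⟪ν, x⟫ < R ∧ ‖x - x₁‖ ≤ ρ ∧
      IsLocalMin (comparisonFunctional ν x₁ s η κ u v) x := by
  have hslab : IsClosed (slab ν R) :=
    (isClosed_closedHalfSpace ν).inter
      (isClosed_le (f := fun z => ⟪ν, z⟫) (by fun_prop) continuous_const)
  have hcompact : IsCompact (closedBall x₁ ρ ∩ slab ν R) :=
    (isCompact_closedBall x₁ ρ).inter_right hslab
  have hcont : ContinuousOn (comparisonFunctional ν x₁ s η κ u v) (slab ν R) :=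
    (((hu.const_mul (1 - s)).sub hv).add (by fun_prop)).sub (by fun_prop)
  have hmem₁ : x₁ ∈ closedBall x₁ ρ ∩ slab ν R := ⟨mem_closedBall_self hρ.le, hx₁⟩
  obtain ⟨x, ⟨hxρ, hx⟩, hmin⟩ :=
    hcompact.exists_isMinOn ⟨x₁, hmem₁⟩ (hcont.mono inter_subset_right)
  rw [mem_closedBall, dist_eq_norm] at hxρ
  have hgap : c + κ * ‖x - x₁‖ ^ 2 < v x - u x := by
    have hle : comparisonFunctional ν x₁ s η κ u v x ≤ comparisonFunctional ν x₁ s η κ u v x₁ :=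
      hmin hmem₁
    simp only [comparisonFunctional, sub_self, norm_zero] at hle
    have hsu₁ := mul_le_mul_of_nonneg_left (abs_le.1 (huB x₁ hx₁)).1 hs
    have hsu := mul_le_mul_of_nonneg_left (abs_le.1 (huB x hx)).2 hs
    have hη₁ : 0 ≤ η * ⟪ν, x₁⟫ ^ 2 := by positivity
    have hηx : η * ⟪ν, x⟫ ^ 2 ≤ η * R ^ 2 :=
      mul_le_mul_of_nonneg_left (pow_le_pow_left₀ hx.1 hx.2 2) hη
    linarith
  have hquad : 0 ≤ κ * ‖x - x₁‖ ^ 2 := by positivity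
  have hpos : 0 < ⟪ν, x⟫ := hx.1.lt_of_ne fun h => by linarith [hbot x h.symm]
  have hltR : ⟪ν, x⟫ < R := hx.2.lt_of_ne fun h => by linarith [htop x h]
  have hltρ : ‖x - x₁‖ < ρ := hxρ.lt_of_ne fun h => by
    rw [h] at hgap
    linarith [(abs_le.1 (hvB x hx)).2, (abs_le.1 (huB x hx)).1]
  refine ⟨x, hpos, hltR, hxρ, hmin.isLocalMin (inter_mem ?_ ?_)⟩
  · exact closedBall_mem_nhds_of_mem (by rwa [mem_ball, dist_eq_norm])
  · have hopen : IsOpen {z : E | ⟪ν, z⟫ < R} := isOpen_lt (by fun_prop) continuous_const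
    filter_upwards [closedHalfSpace_mem_nhds hpos, hopen.mem_nhds hltR] with z hz₀ hzR
    exact ⟨hz₀, le_of_lt hzR⟩

theorem le_add_of_isSubsolutionAt_of_isSupersolutionAt (hp : 1 < p) (hν : ‖ν‖ = 1)
    (hu : ContinuousOn u (slab ν R)) (hv : ContinuousOn v (slab ν R))
    (huB : ∀ z ∈ slab ν R, |u z| ≤ B) (hvB : ∀ z ∈ slab ν R, |v z| ≤ B)
    (husuper : ∀ z, 0 < ⟪ν, z⟫ → ⟪ν, z⟫ < R → IsSupersolutionAt p u z)
    (hvsub : ∀ z, 0 < ⟪ν, z⟫ → ⟪ν, z⟫ < R → IsSubsolutionAt p v z)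
    (hbot : ∀ z, ⟪ν, z⟫ = 0 → v z ≤ u z + c) (htop : ∀ z, ⟪ν, z⟫ = R → v z ≤ u z + c)
    (hx : x ∈ slab ν R) : v x ≤ u x + c := by
  by_contra! hlt
  set σ := v x - u x - c
  have hσ : 0 < σ := by linarith
  have hxpos : 0 < ⟪ν, x⟫ := hx.1.lt_of_ne fun h => by linarith [hbot x h.symm]
  have hR : 0 < R := hxpos.trans_le hx.2
  have hB : 0 ≤ B := (abs_nonneg _).trans (huB x hx)
  obtain ⟨s, hs₀, hs₁, hsB⟩ : ∃ s > 0, s < 1 ∧ s * B ≤ σ / 8 := by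
    refine ⟨min (1 / 2) (σ / 8 / (B + 1)), by positivity,
      (min_le_left _ _).trans_lt (by norm_num), ?_⟩
    calc min (1 / 2) (σ / 8 / (B + 1)) * B ≤ σ / 8 / (B + 1) * (B + 1) := by
          gcongr
          · exact min_le_right _ _
          · linarith
      _ = σ / 8 := div_mul_cancel₀ _ (by positivity)
  obtain ⟨η, hη, hηR, hηp⟩ := exists_pos_mul_rpow_lt hp hs₀ hR (by positivity : 0 < σ / 4)
  obtain ⟨ρ, hρ, κ, hκ, hκρ₂, hκρ, hκN⟩ := exists_radius_and_curvature (mul_pos hη hR)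
    (half_pos hη) (by positivity : 0 < 2 * B + |c| + 1) (N := Module.finrank ℝ E)
  obtain ⟨z, hz₀, hzR, hzρ, hmin⟩ := exists_isLocalMin_comparisonFunctional hu hv huB hvB hbot htop
    hx hs₀.le hη.le hκ.le hρ (by linarith [neg_abs_le c]) (by linarith)
  have hineq := le_mul_rpow_of_isLocalMin_comparisonFunctional hp.le hν hs₀ hs₁ hη.le hκ.le
    (husuper z hz₀ hzR) (hvsub z hz₀ hzR) hmin
  have hgrad : 2 * κ * ‖z - x‖ + 2 * η * |⟪ν, z⟫| ≤ 4 * η * R := by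
    have hκz : κ * ‖z - x‖ ≤ κ * ρ := by gcongr
    have hηz : η * |⟪ν, z⟫| ≤ η * R := by
      rw [abs_of_pos hz₀]
      gcongr
    linarith
  have hmono : s * ((2 * κ * ‖z - x‖ + 2 * η * |⟪ν, z⟫|) / s) ^ p ≤ s * (4 * η * R / s) ^ p := by
    gcongr
  linarith

end Comparison

section TangentialInvariance

variable {E : Type*} [NormedAddCommGroup E] [InnerProductSpace ℝ E] [FiniteDimensional ℝ E]
  {p β : ℝ} {ν x h : E} {u : E → ℝ}

lemma IsSubsolutionAt.comp_add_right (hu : IsSubsolutionAt p u (x + h)) :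
    IsSubsolutionAt p (fun z => u (z + h)) x := by
  refine ⟨hu.1.comp x (by fun_prop), ?_⟩
  have hlap : Δ (fun z => u (z + h)) x = Δ u (x + h) := by
    simp only [laplacian_eq_sum_orthonormalBasis _ _ (stdOrthonormalBasis ℝ E),
      iteratedFDeriv_comp_add_right]
  rw [hlap, fderiv_comp_add_right]
  exact hu.2

namespace IsHalfSpaceSolution

lemma exists_forall_abs_apply_le (hu : IsHalfSpaceSolution p ν u) (hν : ‖ν‖ = 1) (hβ₀ : 0 < β)
    (hβ₁ : β < 1) (hβp : β * (p - 1) = 1) (R : ℝ) : ∃ B, ∀ z ∈ slab ν R, |u z| ≤ B := by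
  refine ⟨holderConst β (Module.finrank ℝ E) * R ^ (1 - β), fun z hz => ?_⟩
  refine (hu.abs_apply_le hν hβ₀ hβ₁ hβp hz.1).trans ?_
  have hconst := (holderConst_pos hβ₁ (Nat.cast_nonneg (Module.finrank ℝ E))).le
  exact mul_le_mul_of_nonneg_left (Real.rpow_le_rpow hz.1 hz.2 (sub_pos.2 hβ₁).le) hconst

lemma apply_add_le (hu : IsHalfSpaceSolution p ν u) (hν : ‖ν‖ = 1) (hβ₀ : 0 < β) (hβ₁ : β < 1)
    (hβp : β * (p - 1) = 1) (hh : ⟪ν, h⟫ = 0) (hx : 0 ≤ ⟪ν, x⟫) : u (x + h) ≤ u x := by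
  refine le_of_forall_pos_le_add fun ε hε => ?_
  have hinner : ∀ z, ⟪ν, z + h⟫ = ⟪ν, z⟫ := fun z => by rw [inner_add_right, hh, add_zero]
  obtain ⟨R₀, hR₀⟩ := hu.exists_forall_sub_le hν hβ₀ hβ₁ hβp (-h) hε
  set R := max R₀ ⟪ν, x⟫
  obtain ⟨B, hB⟩ := hu.exists_forall_abs_apply_le hν hβ₀ hβ₁ hβp R
  have hcont : ContinuousOn u (slab ν R) := hu.continuousOn.mono fun z hz => hz.1
  have hslab : ∀ z ∈ slab ν R, z + h ∈ slab ν R := fun z hz => by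
    rwa [slab, mem_ofPred_eq, hinner]
  refine le_add_of_isSubsolutionAt_of_isSupersolutionAt (v := fun z => u (z + h))
    (one_lt_of_mul_sub_one_eq_one hβ₀ hβp) hν hcont (hcont.comp (by fun_prop) hslab) hB
    (fun z hz => hB _ (hslab z hz)) (fun z hz _ => hu.isSupersolutionAt hz)
    (fun z hz _ => (hu.isSubsolutionAt ((hinner z).symm ▸ hz)).comp_add_right)
    (fun z hz => ?_) (fun z hz => ?_) ⟨hx, le_max_right _ _⟩
  · rw [hu.boundary z hz, hu.boundary _ ((hinner z).trans hz), zero_add]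
    exact hε.le
  · have hfar := hR₀ (z + h) (by rw [hinner, hz]; exact le_max_left _ _)
    rw [add_neg_cancel_right] at hfar
    linarith

theorem apply_eq_apply_inner_smul (hu : IsHalfSpaceSolution p ν u) (hν : ‖ν‖ = 1) (hβ₀ : 0 < β)
    (hβ₁ : β < 1) (hβp : β * (p - 1) = 1) (hx : 0 ≤ ⟪ν, x⟫) : u x = u (⟪ν, x⟫ • ν) := by
  have hproj : ⟪ν, ⟪ν, x⟫ • ν⟫ = ⟪ν, x⟫ := by simp [real_inner_smul_right, hν]
  have htan : ⟪ν, ⟪ν, x⟫ • ν - x⟫ = 0 := by rw [inner_sub_right, hproj, sub_self]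
  apply le_antisymm
  · simpa using hu.apply_add_le hν hβ₀ hβ₁ hβp (h := x - ⟪ν, x⟫ • ν) (x := ⟪ν, x⟫ • ν)
      (by rw [← neg_sub, inner_neg_right, htan, neg_zero]) (hproj.symm ▸ hx)
  · simpa using hu.apply_add_le hν hβ₀ hβ₁ hβp htan hx

end IsHalfSpaceSolution

end TangentialInvariance

section PowerODE

variable {p β : ℝ} {z : ℝ → ℝ} {s t : ℝ}

lemma eqOn_Ici_of_hasDerivAt_eq {f g f' : ℝ → ℝ} {a : ℝ} (hf : ContinuousOn f (Ici a))
    (hg : ContinuousOn g (Ici a)) (hf' : ∀ t, a < t → HasDerivAt f (f' t) t)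
    (hg' : ∀ t, a < t → HasDerivAt g (f' t) t) (ha : f a = g a) : EqOn f g (Ici a) := by
  intro t ht
  rcases (mem_Ici.1 ht).eq_or_lt with rfl | hlt
  · exact ha
  obtain ⟨c, -, hc⟩ := exists_hasDerivAt_eq_slope (fun s => f s - g s) (fun s => f' s - f' s) hlt
    ((hf.sub hg).mono Icc_subset_Ici_self) fun s hs => (hf' s hs.1).sub (hg' s hs.1)
  rw [sub_self, eq_comm, div_eq_zero_iff, or_iff_left (sub_pos.2 hlt).ne'] at hc
  linarith

lemma rpow_one_sub_eq_of_hasDerivAt {c : ℝ} (hpos : ∀ r, s ≤ r → 0 < z r)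
    (hz : ∀ r, s ≤ r → HasDerivAt z (c * z r ^ p) r) (hst : s ≤ t) :
    z t ^ (1 - p) = z s ^ (1 - p) + (1 - p) * c * (t - s) := by
  have hpow : ∀ r, s ≤ r → HasDerivAt (fun r => z r ^ (1 - p)) ((1 - p) * c) r := by
    intro r hr
    refine ((hz r hr).rpow_const (p := 1 - p) (Or.inl (hpos r hr).ne')).congr_deriv ?_
    have hcancel : z r ^ p * z r ^ (1 - p - 1) = 1 := by
      rw [← Real.rpow_add (hpos r hr)]
      ring_nf
      exact Real.rpow_zero _
    linear_combination (1 - p) * c * hcancel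
  have hlin : ∀ r, HasDerivAt (fun r => z s ^ (1 - p) + (1 - p) * c * (r - s)) ((1 - p) * c) r :=
    fun r => by
      simpa using (((hasDerivAt_id r).sub_const s).const_mul ((1 - p) * c)).const_add
        (z s ^ (1 - p))
  exact eqOn_Ici_of_hasDerivAt_eq
    (fun r hr => (hpow r hr).continuousAt.continuousWithinAt)
    (fun r _ => (hlin r).continuousAt.continuousWithinAt) (fun r hr => hpow r hr.le)
    (fun r _ => hlin r) (by simp) hst

lemma antitoneOn_of_hasDerivAt_neg_abs_rpow (hz : ∀ t, 0 < t → HasDerivAt z (-|z t| ^ p) t) :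
    AntitoneOn z (Ioi 0) := by
  refine antitoneOn_of_deriv_nonpos (convex_Ioi 0)
    (fun t ht => (hz t ht).continuousAt.continuousWithinAt) ?_ ?_ <;> rw [interior_Ioi]
  · exact fun t ht => (hz t ht).differentiableAt.differentiableWithinAt
  · intro t ht
    rw [(hz t ht).deriv]
    exact neg_nonpos.2 (by positivity)

lemma nonneg_of_hasDerivAt_neg_abs_rpow (hp : 1 < p)
    (hz : ∀ t, 0 < t → HasDerivAt z (-|z t| ^ p) t) (ht : 0 < t) : 0 ≤ z t := by
  by_contra! hneg
  have hneg_after : ∀ r, t ≤ r → 0 < -z r := fun r hr => neg_pos.2 <|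
    (antitoneOn_of_hasDerivAt_neg_abs_rpow hz ht (ht.trans_le hr) hr).trans_lt hneg
  have hderiv : ∀ r, t ≤ r → HasDerivAt (fun r => -z r) (1 * (-z r) ^ p) r := fun r hr => by
    refine (hz r (ht.trans_le hr)).fun_neg.congr_deriv ?_
    rw [abs_of_neg (neg_pos.1 (hneg_after r hr)), neg_neg, one_mul]
  have hp' : 0 < p - 1 := sub_pos.2 hp
  have hwidth : 0 < (-z t) ^ (1 - p) / (p - 1) := div_pos (Real.rpow_pos_of_pos (by linarith) _) hp'
  have hblowup := rpow_one_sub_eq_of_hasDerivAt hneg_after hderiv (le_add_of_nonneg_right hwidth.le)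
  have hzero : (-z t) ^ (1 - p) + (1 - p) * 1 * (t + (-z t) ^ (1 - p) / (p - 1) - t) = 0 := by
    field_simp
    ring
  exact (Real.rpow_pos_of_pos (hneg_after _ (le_add_of_nonneg_right hwidth.le)) (1 - p)).ne'
    (hblowup.trans hzero)

lemma eq_zero_of_hasDerivAt_neg_abs_rpow (hp : 1 < p)
    (hz : ∀ t, 0 < t → HasDerivAt z (-|z t| ^ p) t) (hs : 0 < s) (hzs : z s = 0) (ht : 0 < t) :
    z t = 0 := by
  have hnonneg : ∀ r, 0 < r → 0 ≤ z r := fun r => nonneg_of_hasDerivAt_neg_abs_rpow hp hz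
  have hanti := antitoneOn_of_hasDerivAt_neg_abs_rpow hz
  rcases le_total s t with hst | hts
  · exact le_antisymm (hzs ▸ hanti hs ht hst) (hnonneg t ht)
  have hderiv : ∀ r ∈ Icc (-s) (-t), HasDerivAt (fun r => z (-r)) (|z (-r)| ^ p) r := by
    intro r hr
    refine ((hz (-r) (by linarith [hr.2])).comp r (hasDerivAt_neg r)).congr_deriv ?_
    rw [neg_mul_neg, mul_one]
  have hbound : ∀ r ∈ Ico (-s) (-t), ‖|z (-r)| ^ p‖ ≤ z t ^ (p - 1) * ‖z (-r)‖ := by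
    intro r hr
    have hle : |z (-r)| ≤ z t := by
      rw [abs_of_nonneg (hnonneg _ (by linarith [hr.2]))]
      exact hanti ht (show 0 < -r by linarith [hr.2]) (by linarith [hr.2])
    calc ‖|z (-r)| ^ p‖ = |z (-r)| ^ (p - 1) * |z (-r)| := by
          rw [Real.norm_of_nonneg (by positivity),
            ← Real.rpow_add_one' (abs_nonneg _) (by linarith), sub_add_cancel]
      _ ≤ z t ^ (p - 1) * ‖z (-r)‖ := mul_le_mul_of_nonneg_right
          (Real.rpow_le_rpow (abs_nonneg _) hle (by linarith)) (abs_nonneg _)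
  have hzero := eq_zero_of_abs_deriv_le_mul_abs_self_of_eq_zero_right
    (fun r hr => (hderiv r hr).continuousAt.continuousWithinAt)
    (fun r hr => (hderiv r (Ico_subset_Icc_self hr)).hasDerivWithinAt) (by simpa using hzs) hbound
    (-t) (right_mem_Icc.2 (neg_le_neg hts))
  simpa using hzero

lemma exists_eq_mul_rpow_neg_of_hasDerivAt (hβ₀ : 0 < β) (hβp : β * (p - 1) = 1)
    (hz : ∀ t, 0 < t → HasDerivAt z (-|z t| ^ p) t) (hpos : ∀ t, 0 < t → 0 < z t) :
    ∃ α ≥ 0, ∀ t, 0 < t → z t = β ^ β * (α + t) ^ (-β) := by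
  have hz' : ∀ t, 0 < t → HasDerivAt z (-1 * z t ^ p) t := fun t ht =>
    (hz t ht).congr_deriv (by rw [abs_of_pos (hpos t ht), neg_one_mul])
  have hlin : ∀ s t, 0 < s → s ≤ t → z t ^ (1 - p) = z s ^ (1 - p) + (p - 1) * (t - s) := by
    intro s t hs hst
    rw [rpow_one_sub_eq_of_hasDerivAt (fun r hr => hpos r (hs.trans_le hr))
      (fun r hr => hz' r (hs.trans_le hr)) hst]
    ring
  set α := β * z 1 ^ (1 - p) - 1
  have hα : ∀ t, 0 < t → β * z t ^ (1 - p) = α + t := by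
    intro t ht
    rcases le_total t 1 with h | h
    · linear_combination -β * hlin t 1 ht h + (t - 1) * hβp
    · linear_combination β * hlin 1 t one_pos h + (t - 1) * hβp
  have hα_pos : ∀ t, 0 < t → 0 < α + t := fun t ht =>
    hα t ht ▸ mul_pos hβ₀ (Real.rpow_pos_of_pos (hpos t ht) _)
  refine ⟨α, le_of_forall_pos_lt_add hα_pos, fun t ht => ?_⟩
  have hz_pos := hpos t ht
  calc z t = (z t ^ (1 - p)) ^ (-β) := by
        rw [← Real.rpow_mul hz_pos.le, show (1 - p) * -β = 1 by linarith, Real.rpow_one]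
    _ = β ^ β * (β * z t ^ (1 - p)) ^ (-β) := by
        rw [Real.mul_rpow hβ₀.le (by positivity), ← mul_assoc, ← Real.rpow_add hβ₀, add_neg_cancel,
          Real.rpow_zero, one_mul]
    _ = β ^ β * (α + t) ^ (-β) := by rw [hα t ht]

theorem eq_zero_or_exists_eq_rpow_of_hasDerivAt {U : ℝ → ℝ} (hβ₀ : 0 < β) (hβ₁ : β < 1)
    (hβp : β * (p - 1) = 1) (hU : ContinuousOn U (Ici 0)) (hU₀ : U 0 = 0)
    (hU' : ∀ t, 0 < t → HasDerivAt U (z t) t) (hz : ∀ t, 0 < t → HasDerivAt z (-|z t| ^ p) t) :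
    (∀ t, 0 ≤ t → U t = 0) ∨ ∃ α ≥ 0, ∀ t, 0 ≤ t →
      U t = β ^ β / (1 - β) * ((α + t) ^ (1 - β) - α ^ (1 - β)) := by
  have hp : 1 < p := one_lt_of_mul_sub_one_eq_one hβ₀ hβp
  have hexp : 0 < 1 - β := sub_pos.2 hβ₁
  by_cases hvanish : ∃ s, 0 < s ∧ z s = 0
  · obtain ⟨s, hs, hzs⟩ := hvanish
    refine Or.inl fun t ht => eqOn_Ici_of_hasDerivAt_eq hU continuousOn_const hU' (fun r hr => ?_)
      hU₀ ht
    exact (hasDerivAt_const r 0).congr_deriv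
      (eq_zero_of_hasDerivAt_neg_abs_rpow hp hz hs hzs hr).symm
  · push Not at hvanish
    obtain ⟨α, hα, hzα⟩ := exists_eq_mul_rpow_neg_of_hasDerivAt hβ₀ hβp hz fun t ht =>
      (nonneg_of_hasDerivAt_neg_abs_rpow hp hz ht).lt_of_ne' (hvanish t ht)
    refine Or.inr ⟨α, hα, fun t ht => eqOn_Ici_of_hasDerivAt_eq
      (g := fun t => β ^ β / (1 - β) * ((α + t) ^ (1 - β) - α ^ (1 - β))) hU
      (Continuous.continuousOn ?_) hU' (fun r hr => ?_) (by simp [hU₀]) ht⟩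
    · have hrpow : Continuous fun t : ℝ => t ^ (1 - β) := Real.continuous_rpow_const hexp.le
      exact ((hrpow.comp (continuous_const.add continuous_id)).sub continuous_const).const_mul _
    · have hbase : α + r ≠ 0 := (add_pos_of_nonneg_of_pos hα hr).ne'
      have hpow : HasDerivAt (fun t : ℝ => (α + t) ^ (1 - β))
          (1 * (1 - β) * (α + r) ^ (1 - β - 1)) r :=
        ((hasDerivAt_id r).const_add α).rpow_const (Or.inl hbase)
      refine ((hpow.sub_const (α ^ (1 - β))).const_mul (β ^ β / (1 - β))).congr_deriv ?_
      rw [hzα r hr, show 1 - β - 1 = -β by ring]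
      field_simp

end PowerODE

section OneDimensional

variable {E : Type*} [NormedAddCommGroup E] [InnerProductSpace ℝ E] {p β : ℝ} {ν x : E}
  {u : E → ℝ} {g g' : ℝ → ℝ} {g'' : ℝ}

lemma norm_fderiv_eq_of_eventuallyEq_comp_inner (hν : ‖ν‖ = 1) (hu : ContDiffAt ℝ 2 u x)
    (heq : u =ᶠ[𝓝 x] fun z => g ⟪ν, z⟫) (hg : ∀ᶠ t in 𝓝 ⟪ν, x⟫, HasDerivAt g (g' t) t)
    (hg' : HasDerivAt g' g'' ⟪ν, x⟫) : ‖fderiv ℝ u x‖ = |g' ⟪ν, x⟫| := by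
  have hfderiv : fderiv ℝ u x = g' ⟪ν, x⟫ • innerSL ℝ ν := by
    ext a
    exact ((HasLineJetAt.of_contDiffAt hu).unique (hasLineJetAt_comp_inner hg hg') heq a).1
  rw [hfderiv, norm_smul, innerSL_apply_norm, hν, mul_one, Real.norm_eq_abs]

variable [FiniteDimensional ℝ E]

lemma laplacian_eq_of_eventuallyEq_comp_inner (hν : ‖ν‖ = 1) (hu : ContDiffAt ℝ 2 u x)
    (heq : u =ᶠ[𝓝 x] fun z => g ⟪ν, z⟫) (hg : ∀ᶠ t in 𝓝 ⟪ν, x⟫, HasDerivAt g (g' t) t)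
    (hg' : HasDerivAt g' g'' ⟪ν, x⟫) : Δ u x = g'' := by
  have hjet := (HasLineJetAt.of_contDiffAt hu).unique (hasLineJetAt_comp_inner hg hg') heq
  set b := stdOrthonormalBasis ℝ E
  rw [laplacian_eq_sum_orthonormalBasis u x b]
  simp only [(hjet _).2, ← Finset.mul_sum, b.sum_sq_inner_left, hν, one_pow, mul_one]

namespace IsHalfSpaceSolution

lemma contDiffAt_profile (hu : IsHalfSpaceSolution p ν u) (hν : ‖ν‖ = 1) {t : ℝ} (ht : 0 < t) :
    ContDiffAt ℝ 2 (fun s : ℝ => u (s • ν)) t := by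
  have hinner : 0 < ⟪ν, t • ν⟫ := by simpa [real_inner_smul_right, hν] using ht
  exact (hu.contDiffAt hinner).comp t (by fun_prop)

lemma hasDerivAt_deriv_profile (hu : IsHalfSpaceSolution p ν u) (hν : ‖ν‖ = 1) (hβ₀ : 0 < β)
    (hβ₁ : β < 1) (hβp : β * (p - 1) = 1) {t : ℝ} (ht : 0 < t) :
    HasDerivAt (deriv fun s : ℝ => u (s • ν)) (-|deriv (fun s : ℝ => u (s • ν)) t| ^ p) t := by
  set U : ℝ → ℝ := fun s => u (s • ν)
  have hinner : ⟪ν, t • ν⟫ = t := by simp [real_inner_smul_right, hν]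
  have hpos : 0 < ⟪ν, t • ν⟫ := hinner.symm ▸ ht
  have heq : u =ᶠ[𝓝 (t • ν)] fun z => U ⟪ν, z⟫ := by
    filter_upwards [closedHalfSpace_mem_nhds hpos] with z hz
    exact hu.apply_eq_apply_inner_smul hν hβ₀ hβ₁ hβp hz
  have hU : ∀ᶠ s in 𝓝 ⟪ν, t • ν⟫, HasDerivAt U (deriv U s) s := by
    filter_upwards [lt_mem_nhds hpos] with s hs
    exact ((hu.contDiffAt_profile hν hs).differentiableAt (by norm_num)).hasDerivAt
  have hU' : HasDerivAt (deriv U) (deriv (deriv U) t) ⟪ν, t • ν⟫ := by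
    rw [hinner]
    exact (((hu.contDiffAt_profile hν ht).derivWithin (m := 1) (by norm_num)).differentiableAt
      (by norm_num)).hasDerivAt
  have hpde := hu.neg_laplacian _ hpos
  rw [laplacian_eq_of_eventuallyEq_comp_inner hν (hu.contDiffAt hpos) heq hU hU',
    norm_fderiv_eq_of_eventuallyEq_comp_inner hν (hu.contDiffAt hpos) heq hU hU', hinner] at hpde
  rwa [hinner, neg_eq_iff_eq_neg.1 hpde] at hU'

end IsHalfSpaceSolution

end OneDimensional

theorem stmt1_general {E : Type*} [NormedAddCommGroup E] [InnerProductSpace ℝ E]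
    [FiniteDimensional ℝ E] (p β cp : ℝ) (hp : 2 < p) (hβ : β = 1 / (p - 1))
    (hcp : cp = β ^ β / (1 - β)) (ν : E) (hν : ‖ν‖ = 1) (u : E → ℝ)
    (hu : IsHalfSpaceSolution p ν u) :
    (∀ x, 0 ≤ ⟪ν, x⟫ → u x = 0) ∨
      ∃ α : ℝ, 0 ≤ α ∧ ∀ x, 0 ≤ ⟪ν, x⟫ →
        u x = cp * ((α + ⟪ν, x⟫) ^ (1 - β) - α ^ (1 - β)) := by
  have hp' : 0 < p - 1 := by linarith
  have hβ₀ : 0 < β := hβ ▸ one_div_pos.2 hp'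
  have hβ₁ : β < 1 := by
    rw [hβ, div_lt_one hp']
    linarith
  have hβp : β * (p - 1) = 1 := hβ ▸ one_div_mul_cancel hp'.ne'
  have hprofile : ∀ x, 0 ≤ ⟪ν, x⟫ → u x = u (⟪ν, x⟫ • ν) := fun x =>
    hu.apply_eq_apply_inner_smul hν hβ₀ hβ₁ hβp
  have hcont : ContinuousOn (fun t : ℝ => u (t • ν)) (Ici 0) :=
    hu.continuousOn.comp (by fun_prop) fun t ht => by
      simpa [real_inner_smul_right, hν] using ht
  rcases eq_zero_or_exists_eq_rpow_of_hasDerivAt hβ₀ hβ₁ hβp hcont (hu.boundary _ (by simp))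
    (fun t ht => ((hu.contDiffAt_profile hν ht).differentiableAt (by norm_num)).hasDerivAt)
    (fun t ht => hu.hasDerivAt_deriv_profile hν hβ₀ hβ₁ hβp ht) with hzero | ⟨α, hα, hformula⟩
  · exact Or.inl fun x hx => (hprofile x hx).trans (hzero _ hx)
  · exact Or.inr ⟨α, hα, fun x hx => (hprofile x hx).trans (hcp ▸ hformula _ hx)⟩

section Coordinates

variable {n : ℕ} {u : EuclideanSpace ℝ (Fin n) → ℝ} {x : EuclideanSpace ℝ (Fin n)}

lemma lap_eq_laplacian (hu : ContDiffAt ℝ 2 u x) : lap u x = Δ u x := by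
  have hfderiv : DifferentiableAt ℝ (fderiv ℝ u) x :=
    (hu.fderiv_right (m := 1) (by norm_num)).differentiableAt (by norm_num)
  rw [laplacian_eq_sum_orthonormalBasis u x (EuclideanSpace.basisFun _ ℝ), lap]
  simp [iteratedFDeriv_two_apply, fderiv_clm_apply hfderiv (differentiableAt_const _)]

lemma norm_gradient_eq_norm_fderiv : ‖gradient u x‖ = ‖fderiv ℝ u x‖ := by
  simp [gradient]

lemma isHalfSpaceSolution_single_last {n : ℕ} {p : ℝ} {u : EuclideanSpace ℝ (Fin (n + 1)) → ℝ}
    (hcont : ContinuousOn u {x | 0 ≤ x (Fin.last n)})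
    (hC2 : ContDiffOn ℝ 2 u {x | 0 < x (Fin.last n)})
    (hPDE : ∀ x : EuclideanSpace ℝ (Fin (n + 1)), 0 < x (Fin.last n) →
      -lap u x = ‖gradient u x‖ ^ p)
    (hbd : ∀ x : EuclideanSpace ℝ (Fin (n + 1)), x (Fin.last n) = 0 → u x = 0) :
    IsHalfSpaceSolution p (EuclideanSpace.single (Fin.last n) 1) u := by
  have hopen : IsOpen {x : EuclideanSpace ℝ (Fin (n + 1)) | 0 < x (Fin.last n)} :=
    isOpen_lt continuous_const (by fun_prop)
  constructor <;> simp only [EuclideanSpace.inner_single_left, map_one, one_mul]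
  · exact hcont
  · exact hC2
  · intro x hx
    rw [← lap_eq_laplacian (hC2.contDiffAt (hopen.mem_nhds hx)), ← norm_gradient_eq_norm_fderiv]
    exact hPDE x hx
  · exact hbd

end Coordinates

theorem stmt1 {n : ℕ} (p β cp : ℝ) (hp : 2 < p)
    (hβ : β = 1 / (p - 1)) (hcp : cp = β ^ β / (1 - β))
    (u : EuclideanSpace ℝ (Fin (n + 1)) → ℝ)
    (hu_cont : ContinuousOn u {x | 0 ≤ x (Fin.last n)})
    (hu_C2 : ContDiffOn ℝ 2 u {x | 0 < x (Fin.last n)})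
    (hPDE : ∀ x : EuclideanSpace ℝ (Fin (n + 1)), 0 < x (Fin.last n) →
      -lap u x = ‖gradient u x‖ ^ p)
    (hbd : ∀ x : EuclideanSpace ℝ (Fin (n + 1)), x (Fin.last n) = 0 → u x = 0) :
    (∀ x : EuclideanSpace ℝ (Fin (n + 1)), 0 ≤ x (Fin.last n) → u x = 0) ∨
      ∃ α : ℝ, 0 ≤ α ∧ ∀ x : EuclideanSpace ℝ (Fin (n + 1)), 0 ≤ x (Fin.last n) →
        u x = cp * ((α + x (Fin.last n)) ^ (1 - β) - α ^ (1 - β)) := by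
  simpa [EuclideanSpace.inner_single_left] using stmt1_general p β cp hp hβ hcp _ (by simp) u
    (isHalfSpaceSolution_single_last hu_cont hu_C2 hPDE hbd)
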